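/- arXiv:quant-ph/0505038 — 7 statements merged into one kernel-verified Lean document; each statement's English description precedes it below -/
import Mathlib

section
/- Subadditivity of the von Neumann entropy: for every density matrix ρ whose rows and columns are indexed by the pairs Fin dA × Fin dB, one has S(ρ) ≤ S(tr_B ρ) + S(tr_A ρ). -/
open scoped ComplexConjugate ComplexOrder

/-- A density matrix: positive semidefinite with trace one. -/
def IsDensityMatrix {n : Type*} [Fintype n] (ρ : Matrix n n ℂ) : Prop :=
  ρ.PosSemidef ∧ ρ.trace = 1

/-- The von Neumann entropy (in bits) of a (Hermitian) matrix:
`S(ρ) = −∑ᵢ λᵢ log₂ λᵢ` over the eigenvalues, with `0·log₂ 0 = 0`. -/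
noncomputable def vnEntropy {n : Type*} [Fintype n] [DecidableEq n]
    (ρ : Matrix n n ℂ) : ℝ :=
  if h : ρ.IsHermitian then -∑ i, h.eigenvalues i * Real.logb 2 (h.eigenvalues i) else 0

/-- The trace norm of a Hermitian matrix: the sum of the absolute values of
its eigenvalues. -/
noncomputable def traceNorm {n : Type*} [Fintype n] [DecidableEq n]
    (M : Matrix n n ℂ) : ℝ :=
  if h : M.IsHermitian then ∑ i, |h.eigenvalues i| else 0

/-- Partial trace over the second (B) system. -/
noncomputable def ptraceB {dA dB : ℕ} (ρ : Matrix (Fin dA × Fin dB) (Fin dA × Fin dB) ℂ) :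
    Matrix (Fin dA) (Fin dA) ℂ :=
  Matrix.of fun i i' => ∑ k, ρ (i, k) (i', k)

/-- Partial trace over the first (A) system. -/
noncomputable def ptraceA {dA dB : ℕ} (ρ : Matrix (Fin dA × Fin dB) (Fin dA × Fin dB) ℂ) :
    Matrix (Fin dB) (Fin dB) ℂ :=
  Matrix.of fun k k' => ∑ i, ρ (i, k) (i, k')

theorem classical_part {X I J : Type*} [Fintype X] [Fintype I] [Fintype J]
    (l : X → ℝ) (a : I → ℝ) (b : J → ℝ) (P : X → I → J → ℝ)
    (hl : ∀ x, 0 ≤ l x) (hP : ∀ x i j, 0 ≤ P x i j) (hs : ∑ x, l x = 1)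
    (h1 : ∀ x, ∑ i, ∑ j, P x i j = 1) (h2 : ∀ i j, ∑ x, P x i j = 1)
    (ha : ∀ i, ∑ j, ∑ x, l x * P x i j = a i)
    (hb : ∀ j, ∑ i, ∑ x, l x * P x i j = b j) :
    -∑ x, l x * Real.log (l x) ≤
      -∑ i, a i * Real.log (a i) + -∑ j, b j * Real.log (b j) := by
  have hn : ∀ x i j, 0 ≤ l x * P x i j := fun x i j => mul_nonneg (hl x) (hP x i j)
  have ha0 : ∀ i, 0 ≤ a i := fun i => by
    rw [← ha]; exact Finset.sum_nonneg fun j _ => Finset.sum_nonneg fun x _ => hn x i j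
  have hb0 : ∀ i, 0 ≤ b i := fun i => by
    rw [← hb]; exact Finset.sum_nonneg fun j _ => Finset.sum_nonneg fun x _ => hn x j i
  have haz : ∀ x i j, l x * P x i j ≤ a i := fun x i j => by
    rw [← ha]
    exact (Finset.single_le_sum (f := fun x => l x * P x i j) (fun x _ => hn x i j)
      (Finset.mem_univ x)).trans (Finset.single_le_sum (f := fun j => ∑ x, l x * P x i j)
        (fun j _ => Finset.sum_nonneg fun x _ => hn x i j) (Finset.mem_univ j))
  have hbz : ∀ x i j, l x * P x i j ≤ b j := fun x i j => by
    rw [← hb]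
    exact (Finset.single_le_sum (f := fun x => l x * P x i j) (fun x _ => hn x i j)
      (Finset.mem_univ x)).trans (Finset.single_le_sum (f := fun i => ∑ x, l x * P x i j)
        (fun i _ => Finset.sum_nonneg fun x _ => hn x i j) (Finset.mem_univ i))
  have key : ∀ x i j, l x * P x i j - a i * b j * P x i j ≤
      P x i j * (l x * Real.log (l x)) - l x * P x i j * Real.log (a i)
        - l x * P x i j * Real.log (b j) := by
    intro x i j
    by_cases hz : l x * P x i j = 0
    · have : P x i j * (l x * Real.log (l x)) = 0 := by
        rw [← mul_assoc, mul_comm (P x i j), hz, zero_mul]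
      rw [hz, this]
      have := mul_nonneg (mul_nonneg (ha0 i) (hb0 j)) (hP x i j)
      linarith
    · have hp := lt_of_le_of_ne (hn x i j) (Ne.symm hz)
      have hai := hp.trans_le (haz x i j)
      have hbj := hp.trans_le (hbz x i j)
      have hlx : 0 < l x := lt_of_le_of_ne (hl x) (fun h => hz (by rw [← h, zero_mul]))
      have h := Real.log_le_sub_one_of_pos (div_pos (mul_pos hai hbj) hlx)
      rw [Real.log_div (mul_pos hai hbj).ne' hlx.ne', Real.log_mul hai.ne' hbj.ne'] at h
      have h' := mul_le_mul_of_nonneg_left h hp.le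
      have e : l x * P x i j * (a i * b j / l x - 1) = a i * b j * P x i j - l x * P x i j := by
        field_simp
      rw [e] at h'
      linarith
  have sumk := Finset.sum_le_sum (s := Finset.univ) fun i _ =>
    Finset.sum_le_sum (s := Finset.univ) fun j _ =>
    Finset.sum_le_sum (s := Finset.univ) fun x _ => key x i j
  simp only [Finset.sum_sub_distrib] at sumk
  have ef : ∀ f : X → ℝ, ∑ i, ∑ j, ∑ x, P x i j * f x = ∑ x, f x := by
    intro f
    calc ∑ i, ∑ j, ∑ x, P x i j * f x = ∑ i, ∑ x, ∑ j, P x i j * f x :=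
          Finset.sum_congr rfl fun i _ => Finset.sum_comm
      _ = ∑ x, ∑ i, ∑ j, P x i j * f x := Finset.sum_comm
      _ = ∑ x, f x := Finset.sum_congr rfl fun x _ => by
          simp only [← Finset.sum_mul, h1, one_mul]
  have e1 : ∑ i, ∑ j, ∑ x, l x * P x i j = 1 := by
    rw [← hs, ← ef l]; simp only [mul_comm]
  have e2 : ∑ i, a i = 1 := by rw [← e1]; simp only [ha]
  have e3 : ∑ j, b j = 1 := by rw [← e1, Finset.sum_comm]; simp only [hb]
  have e4 : ∑ i, ∑ j, ∑ x, a i * b j * P x i j = 1 := by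
    simp only [← Finset.mul_sum, h2, mul_one, e3, e2]
  have e5 : ∑ i, ∑ j, ∑ x, l x * P x i j * Real.log (a i) = ∑ i, a i * Real.log (a i) := by
    simp only [← Finset.sum_mul, ha]
  have e6 : ∑ i, ∑ j, ∑ x, l x * P x i j * Real.log (b j) = ∑ j, b j * Real.log (b j) := by
    rw [Finset.sum_comm]
    simp only [← Finset.sum_mul, hb]
  rw [e1, e4, ef, e5, e6] at sumk
  linarith

open Matrix Kronecker in
theorem ptraceB_conj {dA dB : ℕ} (ρ : Matrix (Fin dA × Fin dB) (Fin dA × Fin dB) ℂ)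
    (V : Matrix (Fin dA) (Fin dA) ℂ) (W : Matrix (Fin dB) (Fin dB) ℂ) (hW : W * Wᴴ = 1)
    (i : Fin dA) :
    ∑ j, ((V ⊗ₖ W)ᴴ * ρ * (V ⊗ₖ W)) (i, j) (i, j) = (Vᴴ * ptraceB ρ * V) i i := by
  have h : ∀ l l', ∑ j, W l j * star (W l' j) = if l = l' then 1 else 0 := by
    intro l l'
    have := congrFun (congrFun hW l) l'
    simpa [Matrix.mul_apply, Matrix.one_apply] using this
  calc ∑ j, ((V ⊗ₖ W)ᴴ * ρ * (V ⊗ₖ W)) (i, j) (i, j)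
      = ∑ j, ∑ k, ∑ l, ∑ k', ∑ l', (star (V k' i) * ρ (k', l') (k, l) * V k i) *
          (W l j * star (W l' j)) := by
        refine Finset.sum_congr rfl fun j _ => ?_
        simp only [Matrix.mul_apply, Fintype.sum_prod_type, Finset.sum_mul,
          Matrix.conjTranspose_apply, Matrix.kroneckerMap_apply, star_mul']
        refine Finset.sum_congr rfl fun k _ => Finset.sum_congr rfl fun l _ =>
          Finset.sum_congr rfl fun k' _ => Finset.sum_congr rfl fun l' _ => ?_
        ring
    _ = ∑ k, ∑ l, ∑ k', ∑ l', (star (V k' i) * ρ (k', l') (k, l) * V k i) *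
          ∑ j, (W l j * star (W l' j)) := by
        simp only [Finset.mul_sum]
        rw [Finset.sum_comm]
        refine Finset.sum_congr rfl fun k _ => ?_
        rw [Finset.sum_comm]
        refine Finset.sum_congr rfl fun l _ => ?_
        rw [Finset.sum_comm]
        refine Finset.sum_congr rfl fun k' _ => ?_
        rw [Finset.sum_comm]
    _ = _ := by
        simp only [h, Matrix.mul_apply, ptraceB, Matrix.of_apply, Matrix.conjTranspose_apply,
          Finset.sum_mul, Finset.mul_sum, mul_ite, mul_one, mul_zero, Finset.sum_ite_eq,
          Finset.mem_univ, if_true]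
        refine Finset.sum_congr rfl fun k _ => ?_
        rw [Finset.sum_comm]

open Matrix Kronecker in
theorem ptraceA_conj {dA dB : ℕ} (ρ : Matrix (Fin dA × Fin dB) (Fin dA × Fin dB) ℂ)
    (V : Matrix (Fin dA) (Fin dA) ℂ) (W : Matrix (Fin dB) (Fin dB) ℂ) (hV : V * Vᴴ = 1)
    (j : Fin dB) :
    ∑ i, ((V ⊗ₖ W)ᴴ * ρ * (V ⊗ₖ W)) (i, j) (i, j) = (Wᴴ * ptraceA ρ * W) j j := by
  have e : ptraceA ρ = ptraceB (ρ.submatrix Prod.swap Prod.swap) := rfl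
  rw [e, ← ptraceB_conj _ W V hV j]
  refine Finset.sum_congr rfl fun i _ => ?_
  simp only [Matrix.mul_apply, Matrix.conjTranspose_apply, Matrix.kroneckerMap_apply,
    Matrix.submatrix_apply]
  refine Fintype.sum_equiv (Equiv.prodComm _ _) _ _ fun x => ?_
  congr 1
  · refine Fintype.sum_equiv (Equiv.prodComm _ _) _ _ fun y => ?_
    simp [mul_comm]
  · simp [mul_comm]

open Matrix in
theorem spectral_conj {n : Type*} [Fintype n] [DecidableEq n] {A : Matrix n n ℂ}
    (hA : A.IsHermitian) :
    ∃ U : Matrix n n ℂ, U * Uᴴ = 1 ∧ Uᴴ * U = 1 ∧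
      Uᴴ * A * U = diagonal (fun i => (hA.eigenvalues i : ℂ)) := by
  have h1 : (hA.eigenvectorUnitary : Matrix n n ℂ) * (hA.eigenvectorUnitary : Matrix n n ℂ)ᴴ = 1 :=
    Unitary.mul_star_self_of_mem hA.eigenvectorUnitary.2
  have h2 : (hA.eigenvectorUnitary : Matrix n n ℂ)ᴴ * (hA.eigenvectorUnitary : Matrix n n ℂ) = 1 :=
    Unitary.star_mul_self_of_mem hA.eigenvectorUnitary.2
  refine ⟨hA.eigenvectorUnitary, h1, h2, ?_⟩
  have := hA.conjStarAlgAut_star_eigenvectorUnitary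
  rw [Unitary.conjStarAlgAut_apply] at this
  simpa [Matrix.star_eq_conjTranspose, Function.comp_def] using this

open Matrix in
theorem unitary_row_sum {n : Type*} [Fintype n] [DecidableEq n] {M : Matrix n n ℂ}
    (h : M * Mᴴ = 1) (x : n) : ∑ y, Complex.normSq (M x y) = 1 := by
  have := congrFun (congrFun h x) x
  simp only [Matrix.mul_apply, Matrix.conjTranspose_apply, Matrix.one_apply_eq,
    Complex.star_def, Complex.mul_conj] at this
  exact_mod_cast this

open Matrix in
theorem unitary_col_sum {n : Type*} [Fintype n] [DecidableEq n] {M : Matrix n n ℂ}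
    (h : Mᴴ * M = 1) (y : n) : ∑ x, Complex.normSq (M x y) = 1 := by
  have := congrFun (congrFun h y) y
  simp only [Matrix.mul_apply, Matrix.conjTranspose_apply, Matrix.one_apply_eq,
    Complex.star_def, mul_comm (conj _), Complex.mul_conj] at this
  exact_mod_cast this

open Matrix Kronecker in
theorem subadditive_log {dA dB : ℕ}
    (ρ : Matrix (Fin dA × Fin dB) (Fin dA × Fin dB) ℂ) (hρ : IsDensityMatrix ρ)
    (hH : ρ.IsHermitian) (hA : (ptraceB ρ).IsHermitian) (hB : (ptraceA ρ).IsHermitian) :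
    -∑ x, hH.eigenvalues x * Real.log (hH.eigenvalues x) ≤
      -∑ i, hA.eigenvalues i * Real.log (hA.eigenvalues i) +
      -∑ j, hB.eigenvalues j * Real.log (hB.eigenvalues j) := by
  obtain ⟨U, hU1, hU2, hU⟩ := spectral_conj hH
  obtain ⟨V, hV1, hV2, hV⟩ := spectral_conj hA
  obtain ⟨W, hW1, hW2, hW⟩ := spectral_conj hB
  have hK1 : (V ⊗ₖ W) * (V ⊗ₖ W)ᴴ = 1 := by
    rw [Matrix.conjTranspose_kronecker, ← Matrix.mul_kronecker_mul, hV1, hW1,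
      Matrix.one_kronecker_one]
  have hK2 : (V ⊗ₖ W)ᴴ * (V ⊗ₖ W) = 1 := by
    rw [Matrix.conjTranspose_kronecker, ← Matrix.mul_kronecker_mul, hV2, hW2,
      Matrix.one_kronecker_one]
  set K := V ⊗ₖ W with hK
  have hM1 : (Uᴴ * K) * (Uᴴ * K)ᴴ = 1 := by
    rw [Matrix.conjTranspose_mul, Matrix.conjTranspose_conjTranspose, Matrix.mul_assoc,
      ← Matrix.mul_assoc K, hK1, Matrix.one_mul, hU2]
  have hM2 : (Uᴴ * K)ᴴ * (Uᴴ * K) = 1 := by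
    rw [Matrix.conjTranspose_mul, Matrix.conjTranspose_conjTranspose, Matrix.mul_assoc,
      ← Matrix.mul_assoc U, hU1, Matrix.one_mul, hK2]
  have hM3 : (Uᴴ * K)ᴴ * diagonal (fun i => (hH.eigenvalues i : ℂ)) * (Uᴴ * K)
      = Kᴴ * ρ * K := by
    rw [← hU, Matrix.conjTranspose_mul, Matrix.conjTranspose_conjTranspose]
    calc Kᴴ * U * (Uᴴ * ρ * U) * (Uᴴ * K) = Kᴴ * (U * Uᴴ) * ρ * (U * Uᴴ) * K := by
          simp only [Matrix.mul_assoc]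
      _ = _ := by simp only [hU1, Matrix.mul_one]
  set M := Uᴴ * K with hM
  have hq : ∀ y, (Kᴴ * ρ * K) y y =
      ((∑ x, hH.eigenvalues x * Complex.normSq (M x y) : ℝ) : ℂ) := by
    intro y
    rw [← hM3, Matrix.mul_apply]
    push_cast
    refine Finset.sum_congr rfl fun x _ => ?_
    rw [Matrix.mul_diagonal, Matrix.conjTranspose_apply, ← Complex.mul_conj, Complex.star_def]
    ring
  refine classical_part _ _ _ (fun x i j => Complex.normSq (M x (i, j)))
    (fun x => hρ.1.eigenvalues_nonneg x) (fun _ _ _ => Complex.normSq_nonneg _) ?_ ?_ ?_ ?_ ?_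
  · have := hρ.2.symm.trans hH.trace_eq_sum_eigenvalues
    have h' : ((∑ x, hH.eigenvalues x : ℝ) : ℂ) = 1 := by
      push_cast; exact this.symm
    exact_mod_cast h'
  · intro x
    rw [← unitary_row_sum hM1 x, Fintype.sum_prod_type]
  · intro i j
    exact unitary_col_sum hM2 (i, j)
  · intro i
    have := ptraceB_conj ρ V W hW1 i
    rw [hV, Matrix.diagonal_apply_eq] at this
    simp only [← hK, hq] at this
    exact_mod_cast this
  · intro j
    have := ptraceA_conj ρ V W hV1 j
    rw [hW, Matrix.diagonal_apply_eq] at this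
    simp only [← hK, hq] at this
    exact_mod_cast this

theorem ptraceB_herm {dA dB : ℕ} {ρ : Matrix (Fin dA × Fin dB) (Fin dA × Fin dB) ℂ}
    (h : ρ.IsHermitian) : (ptraceB ρ).IsHermitian := by
  ext i j
  simp only [ptraceB, Matrix.conjTranspose_apply, Matrix.of_apply, star_sum, h.apply]

theorem ptraceA_herm {dA dB : ℕ} {ρ : Matrix (Fin dA × Fin dB) (Fin dA × Fin dB) ℂ}
    (h : ρ.IsHermitian) : (ptraceA ρ).IsHermitian := by
  ext i j
  simp only [ptraceA, Matrix.conjTranspose_apply, Matrix.of_apply, star_sum, h.apply]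

/-- subadditivity of the von Neumann entropy. -/
theorem vnEntropy_subadditive {dA dB : ℕ}
    (ρ : Matrix (Fin dA × Fin dB) (Fin dA × Fin dB) ℂ)
    (hρ : IsDensityMatrix ρ) :
    vnEntropy ρ ≤ vnEntropy (ptraceB ρ) + vnEntropy (ptraceA ρ) := by
  have hA := ptraceB_herm hρ.1.1
  have hB := ptraceA_herm hρ.1.1
  have h := subadditive_log ρ hρ hρ.1.1 hA hB
  have h2 : (0 : ℝ) < Real.log 2 := Real.log_pos (by norm_num)
  have h3 := div_le_div_of_nonneg_right h h2.le
  rw [vnEntropy, vnEntropy, vnEntropy, dif_pos hρ.1.1, dif_pos hA, dif_pos hB]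
  simp only [Real.logb, ← mul_div_assoc, ← Finset.sum_div]
  rw [add_div, neg_div, neg_div, neg_div] at h3
  exact h3
end

section
/- Fannes' inequality: there exists a universal constant K such that for every d ≥ 2, every ε ∈ [0,1], and all density matrices ρ and σ on ℂ^d with ‖ρ − σ‖₁ ≤ ε, one has |S(ρ) − S(σ)| ≤ η(ε) + K·ε·log₂ d, where η(x) = −x·log₂ x (with η(0) = 0). -/
open scoped ComplexConjugate ComplexOrder

open scoped InnerProductSpace in
theorem sym_quad {E : Type*} [NormedAddCommGroup E] [InnerProductSpace ℂ E] [FiniteDimensional ℂ E]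
    {n : ℕ} (hn : Module.finrank ℂ E = n) {T : E →ₗ[ℂ] E} (hT : T.IsSymmetric) (x : E) :
    RCLike.re ⟪x, T x⟫_ℂ = ∑ j, hT.eigenvalues hn j * ‖(hT.eigenvectorBasis hn).repr x j‖ ^ 2 := by
  rw [← (hT.eigenvectorBasis hn).repr.inner_map_map, PiLp.inner_apply, map_sum]
  refine Finset.sum_congr rfl fun j _ => ?_
  rw [hT.eigenvectorBasis_apply_self_apply hn]
  rw [RCLike.inner_apply, mul_assoc, RCLike.mul_conj]
  norm_cast

open scoped InnerProductSpace in
theorem weyl_lin {E : Type*} [NormedAddCommGroup E] [InnerProductSpace ℂ E] [FiniteDimensional ℂ E]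
    {n : ℕ} (hn : Module.finrank ℂ E = n) {S T : E →ₗ[ℂ] E} (hS : S.IsSymmetric)
    (hT : T.IsSymmetric) (h : ∀ x, RCLike.re ⟪x, S x⟫_ℂ ≤ RCLike.re ⟪x, T x⟫_ℂ) (i : Fin n) :
    hS.eigenvalues hn i ≤ hT.eigenvalues hn i := by
  let b := hS.eigenvectorBasis hn
  let a := hT.eigenvectorBasis hn
  let f : E →ₗ[ℂ] ({j : Fin n // j ≠ i} → ℂ) := LinearMap.pi fun j =>
    if j.1 < i then a.toBasis.coord j.1 else b.toBasis.coord j.1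
  have hlt : Module.finrank ℂ ({j : Fin n // j ≠ i} → ℂ) < Module.finrank ℂ E := by
    rw [hn, Module.finrank_fintype_fun_eq_card, Fintype.card_subtype_compl]
    simp
    exact i.pos
  obtain ⟨x, hx, hx0⟩ := (Submodule.ne_bot_iff _).1 (LinearMap.ker_ne_bot_of_finrank_lt (f := f) hlt)
  have hf : ∀ j : {j : Fin n // j ≠ i}, f x j = 0 := fun j => by
    rw [LinearMap.mem_ker.1 hx]; rfl
  have ha : ∀ j, j < i → a.repr x j = 0 := fun j hj => by
    have := hf ⟨j, hj.ne⟩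
    simpa [f, hj] using this
  have hb : ∀ j, i < j → b.repr x j = 0 := fun j hj => by
    have := hf ⟨j, hj.ne'⟩
    simpa [f, not_lt.2 hj.le] using this
  have norm_eq : ∀ c : OrthonormalBasis (Fin n) ℂ E, ‖x‖ ^ 2 = ∑ j, ‖c.repr x j‖ ^ 2 := fun c => by
    rw [← c.repr.norm_map x, EuclideanSpace.norm_sq_eq]
  have h1 : hS.eigenvalues hn i * ‖x‖ ^ 2 ≤ RCLike.re ⟪x, S x⟫_ℂ := by
    rw [sym_quad hn hS, norm_eq b, Finset.mul_sum]
    refine Finset.sum_le_sum fun j _ => ?_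
    rcases le_or_gt j i with hj | hj
    · exact mul_le_mul_of_nonneg_right (hS.eigenvalues_antitone hn hj) (by positivity)
    · have := hb j hj
      simp only [b] at this
      simp [b, this]
  have h2 : RCLike.re ⟪x, T x⟫_ℂ ≤ hT.eigenvalues hn i * ‖x‖ ^ 2 := by
    rw [sym_quad hn hT, norm_eq a, Finset.mul_sum]
    refine Finset.sum_le_sum fun j _ => ?_
    rcases le_or_gt i j with hj | hj
    · exact mul_le_mul_of_nonneg_right (hT.eigenvalues_antitone hn hj) (by positivity)
    · have := ha j hj
      simp only [a] at this
      simp [a, this]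
  have hpos : 0 < ‖x‖ ^ 2 := by positivity
  exact le_of_mul_le_mul_right (h1.trans ((h x).trans h2)) hpos

theorem weyl_mat {d : ℕ} {A B : Matrix (Fin d) (Fin d) ℂ} (hA : A.IsHermitian) (hB : B.IsHermitian)
    (h : (B - A).PosSemidef) (i : Fin d) : hA.eigenvalues i ≤ hB.eigenvalues i := by
  unfold Matrix.IsHermitian.eigenvalues Matrix.IsHermitian.eigenvalues₀
  apply weyl_lin
  intro x
  have := h.dotProduct_mulVec_nonneg x.ofLp
  rw [Matrix.sub_mulVec, dotProduct_sub] at this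
  have h2 := (Complex.le_def.1 this).1
  simp only [Complex.sub_re, Complex.zero_re] at h2
  rw [EuclideanSpace.inner_eq_star_dotProduct, EuclideanSpace.inner_eq_star_dotProduct]
  simp only [Matrix.toLpLin_apply]
  rw [dotProduct_comm, dotProduct_comm (Matrix.mulVec B _)]
  simpa using h2

theorem mirsky {d : ℕ} {A B : Matrix (Fin d) (Fin d) ℂ} (hA : A.IsHermitian) (hB : B.IsHermitian) :
    ∑ i, |hA.eigenvalues i - hB.eigenvalues i| ≤ traceNorm (A - B) := by
  have hM : (A - B).IsHermitian := hA.sub hB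
  unfold traceNorm
  rw [dif_pos hM]
  set U := (hM.eigenvectorUnitary : Matrix (Fin d) (Fin d) ℂ) with hU
  have hUU : star U * U = 1 := Unitary.coe_star_mul_self _
  set D : (Fin d → ℝ) → Matrix (Fin d) (Fin d) ℂ :=
    fun v => U * Matrix.diagonal (fun i => (v i : ℂ)) * star U with hD
  have hspec : A - B = D hM.eigenvalues := by
    conv_lhs => rw [hM.spectral_theorem, Unitary.conjStarAlgAut_apply]
    rfl
  have hpsd : ∀ v : Fin d → ℝ, (∀ i, 0 ≤ v i) → (D v).PosSemidef := fun v hv => by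
    refine Matrix.PosSemidef.mul_mul_conjTranspose_same (Matrix.PosSemidef.diagonal ?_) U
    intro i
    simpa using hv i
  have htr : ∀ v : Fin d → ℝ, (D v).trace = ((∑ i, v i : ℝ) : ℂ) := fun v => by
    simp only [hD]
    rw [Matrix.trace_mul_comm, ← mul_assoc, hUU, one_mul, Matrix.trace_diagonal]
    push_cast; rfl
  have hsub : ∀ v w : Fin d → ℝ, D v - D w = D (v - w) := fun v w => by
    simp only [hD]
    rw [← sub_mul, ← mul_sub, Matrix.diagonal_sub]
    simp
  set m := hM.eigenvalues
  let p : Fin d → ℝ := fun i => max (m i) 0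
  have hP := hpsd p (fun i => le_max_right _ _)
  have hC : (B + D p).IsHermitian := hB.add hP.isHermitian
  have h1 := weyl_mat hB hC (by simpa using hP)
  have h2 := weyl_mat hA hC (by
    have : B + D p - A = D (p - m) := by rw [← hsub, ← hspec]; abel
    rw [this]
    exact hpsd _ fun i => by simp [p])
  have tA := hA.trace_eq_sum_eigenvalues
  have tB := hB.trace_eq_sum_eigenvalues
  have tC := hC.trace_eq_sum_eigenvalues
  have tM := htr m
  rw [← hspec, Matrix.trace_sub, tA, tB] at tM
  rw [Matrix.trace_add, htr, tB] at tC
  have tM' : ∑ i, hA.eigenvalues i - ∑ i, hB.eigenvalues i = ∑ i, m i := by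
    simpa using congrArg Complex.re tM
  have tC' : ∑ i, hB.eigenvalues i + ∑ i, p i = ∑ i, hC.eigenvalues i := by
    simpa using congrArg Complex.re tC
  have e : ∑ i, |m i| = ∑ i, (2 * p i - m i) := Finset.sum_congr rfl fun i _ => by
    simp only [p]
    rcases le_total (m i) 0 with h | h
    · rw [abs_of_nonpos h, max_eq_right h]; ring
    · rw [abs_of_nonneg h, max_eq_left h]; ring
  calc _ ≤ ∑ i, (2 * hC.eigenvalues i - hA.eigenvalues i - hB.eigenvalues i) :=
        Finset.sum_le_sum fun i _ => by
          rw [abs_le]; constructor <;> linarith [h1 i, h2 i]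
    _ = _ := by
      rw [e]
      simp only [Finset.sum_sub_distrib, ← Finset.mul_sum]
      linarith

open Real in
theorem nml_sub {x t : ℝ} (hx : 0 ≤ x) (ht : 0 ≤ t) (h1 : x + t ≤ 1) :
    negMulLog x - negMulLog (x + t) ≤ t := by
  rcases hx.eq_or_lt with rfl | hx
  · simp; linarith [negMulLog_nonneg ht (by linarith)]
  have hp : 0 < x + t := by linarith
  have l1 : log (x + t) ≤ 0 := log_nonpos hp.le h1
  have l2 : log (x + t) - log x ≤ t / x := by
    rw [← log_div hp.ne' hx.ne']
    have := log_le_sub_one_of_pos (div_pos hp hx)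
    have e : (x + t) / x - 1 = t / x := by field_simp; ring
    linarith
  have l3 : x * (log (x + t) - log x) ≤ t := by
    calc _ ≤ x * (t / x) := mul_le_mul_of_nonneg_left l2 hx.le
      _ = t := by field_simp
  simp only [negMulLog]
  nlinarith

open Real in
theorem nml_add {x t : ℝ} (hx : 0 ≤ x) (ht : 0 ≤ t) :
    negMulLog (x + t) ≤ negMulLog x + negMulLog t := by
  rcases hx.eq_or_lt with rfl | hx
  · simp
  rcases ht.eq_or_lt with rfl | ht
  · simp
  have l1 : log x ≤ log (x + t) := log_le_log hx (by linarith)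
  have l2 : log t ≤ log (x + t) := log_le_log ht (by linarith)
  simp only [negMulLog]
  nlinarith

open Real in
theorem nml_abs {x y : ℝ} (hx : 0 ≤ x) (hy : 0 ≤ y) (hx1 : x ≤ 1) (hy1 : y ≤ 1) :
    |negMulLog x - negMulLog y| ≤ negMulLog |x - y| + |x - y| := by
  wlog h : x ≤ y generalizing x y
  · rw [abs_sub_comm, abs_sub_comm x y]
    exact this hy hx hy1 hx1 (le_of_not_ge h)
  obtain ⟨t, rfl⟩ : ∃ t, y = x + t := ⟨y - x, by ring⟩
  have ht : 0 ≤ t := by linarith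
  have e : |x - (x + t)| = t := by rw [show x - (x + t) = -t by ring, abs_neg, abs_of_nonneg ht]
  rw [e, abs_le]
  have a1 := nml_sub hx ht hy1
  have a2 := nml_add hx ht
  have a3 := negMulLog_nonneg ht (by linarith)
  constructor <;> linarith

open Real in
theorem nml_jensen {d : ℕ} (hd : 0 < d) (δ : Fin d → ℝ) (h : ∀ i, 0 ≤ δ i) :
    ∑ i, negMulLog (δ i) ≤ negMulLog (∑ i, δ i) + (∑ i, δ i) * log d := by
  have hd' : (0 : ℝ) < d := by exact_mod_cast hd
  have := concaveOn_negMulLog.le_map_sum (t := Finset.univ) (w := fun _ : Fin d => (d : ℝ)⁻¹)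
    (p := δ) (fun _ _ => by positivity) (by simp [hd'.ne']) (fun i _ => h i)
  simp only [smul_eq_mul, ← Finset.mul_sum] at this
  rw [negMulLog_mul] at this
  have h2 := mul_le_mul_of_nonneg_left this hd'.le
  rw [← mul_assoc, mul_inv_cancel₀ hd'.ne', one_mul] at h2
  refine h2.trans (le_of_eq ?_)
  simp only [negMulLog, log_inv]
  field_simp
  ring

open Real in
theorem classical_fannes {d : ℕ} (hd : 0 < d) {ε : ℝ} (h1 : ε ≤ 1) (x y : Fin d → ℝ)
    (hx : ∀ i, 0 ≤ x i) (hy : ∀ i, 0 ≤ y i) (sx : ∑ i, x i = 1) (sy : ∑ i, y i = 1)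
    (h : ∑ i, |x i - y i| ≤ ε) :
    |∑ i, negMulLog (x i) - ∑ i, negMulLog (y i)| ≤ negMulLog ε + ε + ε * log d := by
  have hx1 : ∀ i, x i ≤ 1 := fun i => sx ▸ Finset.single_le_sum (fun i _ => hx i) (Finset.mem_univ i)
  have hy1 : ∀ i, y i ≤ 1 := fun i => sy ▸ Finset.single_le_sum (fun i _ => hy i) (Finset.mem_univ i)
  have hl : 0 ≤ log d := log_natCast_nonneg d
  have hΔ : 0 ≤ ∑ i, |x i - y i| := Finset.sum_nonneg fun i _ => abs_nonneg _
  have j := nml_jensen hd (fun i => |x i - y i|) (fun i => abs_nonneg _)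
  have k := nml_sub hΔ (sub_nonneg.2 h) (by linarith)
  rw [add_sub_cancel] at k
  rw [← Finset.sum_sub_distrib]
  calc _ ≤ ∑ i, |negMulLog (x i) - negMulLog (y i)| := Finset.abs_sum_le_sum_abs _ _
    _ ≤ ∑ i, (negMulLog |x i - y i| + |x i - y i|) :=
      Finset.sum_le_sum fun i _ => nml_abs (hx i) (hy i) (hx1 i) (hy1 i)
    _ ≤ _ := by
      rw [Finset.sum_add_distrib]
      have := mul_le_mul_of_nonneg_right h hl
      linarith

theorem vn_eq {d : ℕ} {A : Matrix (Fin d) (Fin d) ℂ} (hA : A.IsHermitian) :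
    vnEntropy A = (∑ i, Real.negMulLog (hA.eigenvalues i)) / Real.log 2 := by
  unfold vnEntropy
  rw [dif_pos hA, Finset.sum_div, ← Finset.sum_neg_distrib]
  refine Finset.sum_congr rfl fun i _ => ?_
  simp only [Real.negMulLog, Real.logb]
  ring

theorem sum_ev {d : ℕ} {A : Matrix (Fin d) (Fin d) ℂ} (hA : IsDensityMatrix A) :
    ∑ i, hA.1.isHermitian.eigenvalues i = 1 := by
  have := hA.1.isHermitian.trace_eq_sum_eigenvalues
  have h2 := hA.2.symm.trans this
  simpa using (congrArg Complex.re h2).symm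

/-- Fannes' inequality. There is a universal constant `K` such that
for all `d ≥ 2`, `ε ∈ [0,1]` and density matrices `ρ, σ` on `ℂ^d` with
`‖ρ − σ‖₁ ≤ ε`, one has `|S(ρ) − S(σ)| ≤ η(ε) + K ε log₂ d`, with `η(x) = −x log₂ x`. -/
theorem fannes_inequality :
    ∃ K : ℝ, ∀ d : ℕ, 2 ≤ d → ∀ ε : ℝ, 0 ≤ ε → ε ≤ 1 →
      ∀ ρ σ : Matrix (Fin d) (Fin d) ℂ,
        IsDensityMatrix ρ → IsDensityMatrix σ → traceNorm (ρ - σ) ≤ ε →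
        |vnEntropy ρ - vnEntropy σ| ≤
          -(ε * Real.logb 2 ε) + K * ε * Real.logb 2 d := by
  refine ⟨1 + 1 / Real.log 2, fun d hd ε h0 h1 ρ σ hρ hσ h => ?_⟩
  have l2 : 0 < Real.log 2 := Real.log_pos (by norm_num)
  have ld : Real.log 2 ≤ Real.log d := Real.log_le_log (by norm_num) (by exact_mod_cast hd)
  have key := classical_fannes (by omega : 0 < d) h1 _ _ hρ.1.eigenvalues_nonneg
    hσ.1.eigenvalues_nonneg (sum_ev hρ) (sum_ev hσ) ((mirsky _ _).trans h)
  rw [vn_eq hρ.1.isHermitian, vn_eq hσ.1.isHermitian, ← sub_div, abs_div, abs_of_pos l2,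
    div_le_iff₀ l2]
  refine key.trans ?_
  have e : (-(ε * Real.logb 2 ε) + (1 + 1 / Real.log 2) * ε * Real.logb 2 d) * Real.log 2
      = Real.negMulLog ε + ε * Real.log d + ε * (Real.log d / Real.log 2) := by
    simp only [Real.negMulLog, Real.logb]
    field_simp
    ring
  rw [e]
  have : ε * 1 ≤ ε * (Real.log d / Real.log 2) :=
    mul_le_mul_of_nonneg_left ((one_le_div l2).2 ld) h0
  linarith
end

section
/- Monotonicity of the Holevo information under partial trace: let (q_j)_{j=1}^m be a probability distribution and ρ_1,…,ρ_m density matrices with rows and columns indexed by Fin dA × Fin dB. Then S(∑_j q_j ρ_j) − ∑_j q_j S(ρ_j) ≥ S(∑_j q_j tr_B ρ_j) − ∑_j q_j S(tr_B ρ_j); that is, the Holevo information of the ensemble {(q_j, ρ_j)} is at least the Holevo information of the partially traced ensemble {(q_j, tr_B ρ_j)}. -/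
open scoped ComplexConjugate ComplexOrder

open Matrix in
/-- variational functional -/
noncomputable def hvVal {n : Type*} [Fintype n] (t : ℝ) (ρ σ X : Matrix n n ℂ) : ℝ :=
  (2 * (Xᴴ * ρ).trace - (Xᴴ * σ * X).trace - t * (Xᴴ * X * ρ).trace).re

open Matrix in
theorem hv_val_coord {n : Type*} [Fintype n] [DecidableEq n] (t : ℝ) (U V Y : Matrix n n ℂ)
    (hU : Uᴴ * U = 1) (hV : Vᴴ * V = 1) (p s : n → ℝ) :
    hvVal t (U * diagonal (fun i => (p i : ℂ)) * Uᴴ) (V * diagonal (fun i => (s i : ℂ)) * Vᴴ)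
      (V * Y * Uᴴ) =
    ∑ i, ∑ k, (2 * (star (Y k i) * (Vᴴ * U) k i * p i).re
      - (s k + t * p i) * Complex.normSq (Y k i)) := by
  have e1 : ((V * Y * Uᴴ)ᴴ * (U * diagonal (fun i => (p i : ℂ)) * Uᴴ)).trace
      = (Yᴴ * ((Vᴴ * U) * diagonal (fun i => (p i : ℂ)))).trace := by
    simp only [conjTranspose_mul, conjTranspose_conjTranspose]
    rw [show U * (Yᴴ * Vᴴ) * (U * diagonal (fun i => (p i : ℂ)) * Uᴴ)
      = (U * (Yᴴ * Vᴴ * U * diagonal (fun i => (p i : ℂ)))) * Uᴴ by simp only [mul_assoc],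
      trace_mul_comm, ← mul_assoc, hU, one_mul]
    simp only [mul_assoc]
  have e2 : ((V * Y * Uᴴ)ᴴ * (V * diagonal (fun i => (s i : ℂ)) * Vᴴ) * (V * Y * Uᴴ)).trace
      = (Yᴴ * (diagonal (fun i => (s i : ℂ)) * Y)).trace := by
    simp only [conjTranspose_mul, conjTranspose_conjTranspose]
    rw [show U * (Yᴴ * Vᴴ) * (V * diagonal (fun i => (s i : ℂ)) * Vᴴ) * (V * Y * Uᴴ)
      = (U * (Yᴴ * (Vᴴ * V) * diagonal (fun i => (s i : ℂ)) * (Vᴴ * V) * Y)) * Uᴴ by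
        simp only [mul_assoc],
      trace_mul_comm, ← mul_assoc, hU, hV, one_mul]
    simp only [mul_assoc, mul_one, one_mul]
  have e3 : ((V * Y * Uᴴ)ᴴ * (V * Y * Uᴴ) * (U * diagonal (fun i => (p i : ℂ)) * Uᴴ)).trace
      = (Yᴴ * (Y * diagonal (fun i => (p i : ℂ)))).trace := by
    simp only [conjTranspose_mul, conjTranspose_conjTranspose]
    rw [show U * (Yᴴ * Vᴴ) * (V * Y * Uᴴ) * (U * diagonal (fun i => (p i : ℂ)) * Uᴴ)
      = (U * (Yᴴ * (Vᴴ * V) * Y * (Uᴴ * U) * diagonal (fun i => (p i : ℂ)))) * Uᴴ by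
        simp only [mul_assoc],
      trace_mul_comm, ← mul_assoc, hU, hV, one_mul]
    simp only [mul_assoc, mul_one, one_mul]
  unfold hvVal
  rw [e1, e2, e3]
  generalize Vᴴ * U = W
  simp only [trace, diag, mul_apply (M := Yᴴ), mul_diagonal, diagonal_mul, conjTranspose_apply,
    Finset.mul_sum, ← Finset.sum_sub_distrib, Complex.re_sum]
  refine Finset.sum_congr rfl fun i _ => Finset.sum_congr rfl fun k _ => ?_
  simp [Complex.normSq_apply]
  ring

theorem hv_scalar_le (y w : ℂ) (p c : ℝ) (hc : 0 ≤ c) (h0 : c = 0 → p = 0) :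
    2 * (star y * w * p).re - c * Complex.normSq y ≤ Complex.normSq w * (p ^ 2 / c) := by
  rcases hc.eq_or_lt with h | h
  · rw [h0 h.symm, ← h]; simp
  · rw [← mul_div_assoc, le_div_iff₀ h]
    simp [Complex.normSq_apply]
    nlinarith [sq_nonneg (c * y.re - p * w.re), sq_nonneg (c * y.im - p * w.im)]

theorem hv_scalar_eq (w : ℂ) (p c : ℝ) (h0 : c = 0 → p = 0) :
    2 * (star (w * ((p / c : ℝ) : ℂ)) * w * p).re - c * Complex.normSq (w * ((p / c : ℝ) : ℂ))
      = Complex.normSq w * (p ^ 2 / c) := by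
  by_cases h : c = 0
  · rw [h0 h, h]; simp
  · simp [Complex.normSq_apply, -Complex.ofReal_div]
    field_simp
    ring

open Matrix in
/-- the quadratic form -/
noncomputable def hvF {n : Type*} [Fintype n] (U V : Matrix n n ℂ) (p s : n → ℝ) (t : ℝ) : ℝ :=
  ∑ i, ∑ k, Complex.normSq ((Vᴴ * U) k i) * (p i ^ 2 / (s k + t * p i))

theorem hv_zero {p s t : ℝ} (ht : 0 < t) (hp : 0 ≤ p) (hs : 0 ≤ s) (h : s + t * p = 0) : p = 0 := by
  have h1 : 0 ≤ t * p := by positivity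
  have h2 : t * p = 0 := by linarith
  rcases mul_eq_zero.1 h2 with h | h
  · exact absurd h ht.ne'
  · exact h

open Matrix in
theorem hv_val_le {n : Type*} [Fintype n] [DecidableEq n] {t : ℝ} (ht : 0 < t)
    (U V X : Matrix n n ℂ)
    (hU : Uᴴ * U = 1) (hV : Vᴴ * V = 1) (p s : n → ℝ) (hp : ∀ i, 0 ≤ p i) (hs : ∀ i, 0 ≤ s i) :
    hvVal t (U * diagonal (fun i => (p i : ℂ)) * Uᴴ) (V * diagonal (fun i => (s i : ℂ)) * Vᴴ) X
      ≤ hvF U V p s t := by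
  have hX : X = V * (Vᴴ * X * U) * Uᴴ := by
    rw [show V * (Vᴴ * X * U) * Uᴴ = (V * Vᴴ) * X * (U * Uᴴ) by simp only [mul_assoc],
      mul_eq_one_comm.1 hU, mul_eq_one_comm.1 hV]; simp
  rw [hX, hv_val_coord t U V _ hU hV]
  refine Finset.sum_le_sum fun i _ => Finset.sum_le_sum fun k _ => ?_
  refine hv_scalar_le _ _ _ _ ?_ (hv_zero ht (hp i) (hs k))
  have := hp i; have := hs k; positivity

open Matrix in
theorem hv_val_attain {n : Type*} [Fintype n] [DecidableEq n] {t : ℝ} (ht : 0 < t)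
    (U V : Matrix n n ℂ)
    (hU : Uᴴ * U = 1) (hV : Vᴴ * V = 1) (p s : n → ℝ) (hp : ∀ i, 0 ≤ p i) (hs : ∀ i, 0 ≤ s i) :
    ∃ X, hvVal t (U * diagonal (fun i => (p i : ℂ)) * Uᴴ)
      (V * diagonal (fun i => (s i : ℂ)) * Vᴴ) X = hvF U V p s t := by
  refine ⟨V * (of fun k i => (Vᴴ * U) k i * ((p i / (s k + t * p i) : ℝ) : ℂ)) * Uᴴ, ?_⟩
  rw [hv_val_coord t U V _ hU hV]
  refine Finset.sum_congr rfl fun i _ => Finset.sum_congr rfl fun k _ => ?_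
  exact hv_scalar_eq _ _ _ (hv_zero ht (hp i) (hs k))

open Matrix Kronecker in
theorem hv_trace_kron {dA dB : ℕ} (M : Matrix (Fin dA) (Fin dA) ℂ)
    (ρ : Matrix (Fin dA × Fin dB) (Fin dA × Fin dB) ℂ) :
    ((M ⊗ₖ (1 : Matrix (Fin dB) (Fin dB) ℂ)) * ρ).trace = (M * ptraceB ρ).trace := by
  simp only [trace, diag, mul_apply, Fintype.sum_prod_type, kroneckerMap_apply, ptraceB, of_apply,
    Finset.mul_sum, one_apply, mul_ite, mul_one, mul_zero, ite_mul, zero_mul, Finset.sum_ite_eq,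
    Finset.mem_univ, if_true]
  refine Finset.sum_congr rfl fun i _ => ?_
  rw [Finset.sum_comm]

open Matrix Kronecker in
theorem hv_val_ptrace {dA dB : ℕ} (t : ℝ) (X : Matrix (Fin dA) (Fin dA) ℂ)
    (ρ σ : Matrix (Fin dA × Fin dB) (Fin dA × Fin dB) ℂ) :
    hvVal t (ptraceB ρ) (ptraceB σ) X
      = hvVal t ρ σ (X ⊗ₖ (1 : Matrix (Fin dB) (Fin dB) ℂ)) := by
  unfold hvVal
  have e : (X ⊗ₖ (1 : Matrix (Fin dB) (Fin dB) ℂ))ᴴ = Xᴴ ⊗ₖ (1 : Matrix (Fin dB) (Fin dB) ℂ) := by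
    rw [conjTranspose_kronecker]; simp
  rw [e, hv_trace_kron, ← mul_kronecker_mul, mul_one, hv_trace_kron,
    trace_mul_comm (_ * σ), ← mul_assoc, ← mul_kronecker_mul, mul_one, hv_trace_kron,
    trace_mul_comm (_ * ptraceB σ), ← mul_assoc]

/-- scalar primitive -/
noncomputable def hvg (w p s T : ℝ) : ℝ := w * p * (Real.log (s + T * p) - Real.log s)

theorem hvg_deriv {w p s T : ℝ} (hp : 0 ≤ p) (hs : 0 ≤ s) (hT : 0 < T) :
    HasDerivAt (hvg w p s) (w * (p ^ 2 / (s + T * p))) T := by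
  by_cases h : s + T * p = 0
  · have := hv_zero hT hp hs h
    subst this
    have : hvg w 0 s = fun _ => 0 := by funext; simp [hvg]
    rw [this]; simpa using hasDerivAt_const T (0:ℝ)
  · have h1 : HasDerivAt (fun T => s + T * p) p T := by
      simpa using ((hasDerivAt_id T).mul_const p).const_add s
    have := ((h1.log h).sub_const (Real.log s)).const_mul (w * p)
    refine this.congr_deriv ?_
    ring

theorem hvg_cont {w p s : ℝ} (hp : 0 ≤ p) (hs : 0 ≤ s) (h0 : s = 0 → w * p = 0) :
    ContinuousOn (hvg w p s) (Set.Ici 0) := by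
  by_cases h : s = 0
  · have : hvg w p s = fun _ => 0 := by funext; simp [hvg, h0 h]
    rw [this]; exact continuousOn_const
  · unfold hvg
    refine ContinuousOn.mul continuousOn_const (ContinuousOn.sub ?_ continuousOn_const)
    refine ContinuousOn.log (by fun_prop) fun x hx => ?_
    have hx : 0 ≤ x := hx
    have : 0 < s := lt_of_le_of_ne hs (Ne.symm h)
    positivity

open Filter Topology in
theorem hvg_lim {w p s : ℝ} (hp : 0 ≤ p) (hs : 0 ≤ s) :
    Tendsto (fun T => hvg w p s T - w * p * Real.log T) atTop
      (𝓝 (w * p * (Real.log p - Real.log s))) := by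
  rcases hp.eq_or_lt with h | h
  · subst h; simp [hvg]
  · have h1 : Tendsto (fun T : ℝ => s / T + p) atTop (𝓝 p) := by
      simpa using (tendsto_const_nhds.div_atTop tendsto_id : Tendsto (fun T : ℝ => s / T) atTop (𝓝 0)).add_const p
    have h2 := ((h1.log h.ne').sub_const (Real.log s)).const_mul (w * p)
    refine h2.congr' ?_
    filter_upwards [eventually_gt_atTop 0] with T hT
    have : s / T + p = (s + T * p) / T := by field_simp
    rw [this, Real.log_div (by positivity) hT.ne', hvg]
    ring

open Matrix in
/-- relative entropy in spectral form -/
noncomputable def hvD {n : Type*} [Fintype n] (U V : Matrix n n ℂ) (p s : n → ℝ) : ℝ :=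
  ∑ i, ∑ k, Complex.normSq ((Vᴴ * U) k i) * p i * (Real.log (p i) - Real.log (s k))

open Matrix in
noncomputable def hvG {n : Type*} [Fintype n] (U V : Matrix n n ℂ) (p s : n → ℝ) (T : ℝ) : ℝ :=
  ∑ i, ∑ k, hvg (Complex.normSq ((Vᴴ * U) k i)) (p i) (s k) T

open Matrix in
theorem hv_W_sum {n : Type*} [Fintype n] [DecidableEq n] (U V : Matrix n n ℂ)
    (hU : Uᴴ * U = 1) (hV : Vᴴ * V = 1) (i : n) :
    ∑ k, Complex.normSq ((Vᴴ * U) k i) = 1 := by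
  have h : (Vᴴ * U)ᴴ * (Vᴴ * U) = 1 := by
    rw [conjTranspose_mul, conjTranspose_conjTranspose,
      show Uᴴ * V * (Vᴴ * U) = Uᴴ * (V * Vᴴ) * U by simp only [mul_assoc],
      mul_eq_one_comm.1 hV, mul_one, hU]
  have h2 := congrFun (congrFun h i) i
  rw [mul_apply, one_apply_eq] at h2
  have h3 := congrArg Complex.re h2
  rw [Complex.re_sum] at h3
  simpa [Complex.normSq_apply, conjTranspose_apply] using h3

open Matrix Filter Topology in
theorem hvG_lim {n : Type*} [Fintype n] [DecidableEq n] (U V : Matrix n n ℂ)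
    (hU : Uᴴ * U = 1) (hV : Vᴴ * V = 1) (p s : n → ℝ) (hp : ∀ i, 0 ≤ p i) (hs : ∀ i, 0 ≤ s i)
    (hp1 : ∑ i, p i = 1) :
    Tendsto (fun T => hvG U V p s T - Real.log T) atTop (𝓝 (hvD U V p s)) := by
  have : ∀ T, hvG U V p s T - Real.log T = ∑ i, ∑ k,
      (hvg (Complex.normSq ((Vᴴ * U) k i)) (p i) (s k) T
        - Complex.normSq ((Vᴴ * U) k i) * p i * Real.log T) := by
    intro T
    simp only [Finset.sum_sub_distrib, ← Finset.sum_mul, hv_W_sum U V hU hV, hp1, one_mul, hvG]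
  simp only [this]
  exact tendsto_finsetSum _ fun i _ => tendsto_finsetSum _ fun k _ => hvg_lim (hp i) (hs k)

open Matrix Filter in
theorem hvD_mono {n m : Type*} [Fintype n] [DecidableEq n] [Fintype m] [DecidableEq m]
    (U V : Matrix n n ℂ) (U' V' : Matrix m m ℂ)
    (hU : Uᴴ * U = 1) (hV : Vᴴ * V = 1) (hU' : U'ᴴ * U' = 1) (hV' : V'ᴴ * V' = 1)
    (p s : n → ℝ) (hp : ∀ i, 0 ≤ p i) (hs : ∀ i, 0 ≤ s i) (hp1 : ∑ i, p i = 1)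
    (p' s' : m → ℝ) (hp' : ∀ i, 0 ≤ p' i) (hs' : ∀ i, 0 ≤ s' i) (hp1' : ∑ i, p' i = 1)
    (h0 : ∀ i k, s k = 0 → Complex.normSq ((Vᴴ * U) k i) * p i = 0)
    (h0' : ∀ i k, s' k = 0 → Complex.normSq ((V'ᴴ * U') k i) * p' i = 0)
    (hF : ∀ t, 0 < t → hvF U' V' p' s' t ≤ hvF U V p s t) :
    hvD U' V' p' s' ≤ hvD U V p s := by
  have hd : ∀ T, 0 < T → HasDerivAt (fun T => hvG U V p s T - hvG U' V' p' s' T)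
      (hvF U V p s T - hvF U' V' p' s' T) T := by
    intro T hT
    refine HasDerivAt.sub ?_ ?_
    · exact HasDerivAt.fun_sum fun i _ => HasDerivAt.fun_sum fun k _ => hvg_deriv (hp i) (hs k) hT
    · exact HasDerivAt.fun_sum fun i _ => HasDerivAt.fun_sum fun k _ => hvg_deriv (hp' i) (hs' k) hT
  have hm : MonotoneOn (fun T => hvG U V p s T - hvG U' V' p' s' T) (Set.Ici 0) := by
    refine monotoneOn_of_deriv_nonneg (convex_Ici 0) ?_ ?_ ?_
    · refine ContinuousOn.sub ?_ ?_
      · exact continuousOn_finsetSum _ fun i _ => continuousOn_finsetSum _ fun k _ =>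
          hvg_cont (hp i) (hs k) (h0 i k)
      · exact continuousOn_finsetSum _ fun i _ => continuousOn_finsetSum _ fun k _ =>
          hvg_cont (hp' i) (hs' k) (h0' i k)
    · intro T hT
      rw [interior_Ici] at hT
      exact (hd T hT).differentiableAt.differentiableWithinAt
    · intro T hT
      rw [interior_Ici] at hT
      rw [(hd T hT).deriv]
      exact sub_nonneg.2 (hF T hT)
  refine le_of_tendsto_of_tendsto (hvG_lim U' V' hU' hV' p' s' hp' hs' hp1')
    (hvG_lim U V hU hV p s hp hs hp1) ?_
  filter_upwards [eventually_ge_atTop 0] with T hT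
  have := hm (Set.mem_Ici.2 le_rfl) (Set.mem_Ici.2 hT) hT
  simp [hvG, hvg] at this
  simp only [hvG, hvg]
  linarith

open Matrix in
theorem hv_spec {n : Type*} [Fintype n] [DecidableEq n] {A : Matrix n n ℂ} (hA : A.IsHermitian) :
    A = (hA.eigenvectorUnitary : Matrix n n ℂ) * diagonal (fun i => (hA.eigenvalues i : ℂ))
      * (hA.eigenvectorUnitary : Matrix n n ℂ)ᴴ := by
  have := hA.spectral_theorem
  rw [Unitary.conjStarAlgAut_apply] at this
  exact this

open Matrix in
theorem hv_unit {n : Type*} [Fintype n] [DecidableEq n] {A : Matrix n n ℂ} (hA : A.IsHermitian) :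
    (hA.eigenvectorUnitary : Matrix n n ℂ)ᴴ * (hA.eigenvectorUnitary : Matrix n n ℂ) = 1 :=
  Unitary.coe_star_mul_self hA.eigenvectorUnitary

/-- relative entropy -/
noncomputable def hvRel {n : Type*} [Fintype n] [DecidableEq n] {A B : Matrix n n ℂ}
    (hA : A.IsHermitian) (hB : B.IsHermitian) : ℝ :=
  hvD (hA.eigenvectorUnitary : Matrix n n ℂ) (hB.eigenvectorUnitary : Matrix n n ℂ)
    hA.eigenvalues hB.eigenvalues

open Matrix in
theorem hv_diag {n : Type*} [Fintype n] [DecidableEq n] (U V : Matrix n n ℂ) (p : n → ℝ) (k : n) :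
    ((Vᴴ * (U * diagonal (fun i => (p i : ℂ)) * Uᴴ) * V) k k).re
      = ∑ i, Complex.normSq ((Vᴴ * U) k i) * p i := by
  rw [show Vᴴ * (U * diagonal (fun i => (p i : ℂ)) * Uᴴ) * V
    = (Vᴴ * U) * diagonal (fun i => (p i : ℂ)) * (Vᴴ * U)ᴴ by
      simp only [mul_assoc, conjTranspose_mul, conjTranspose_conjTranspose]]
  generalize Vᴴ * U = W
  rw [mul_apply, Complex.re_sum]
  refine Finset.sum_congr rfl fun i _ => ?_
  simp only [mul_diagonal, conjTranspose_apply]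
  simp [Complex.normSq_apply]
  ring

open Matrix in
theorem hv_diag' {n : Type*} [Fintype n] [DecidableEq n] {A : Matrix n n ℂ}
    (hA : A.IsHermitian) (V : Matrix n n ℂ) (k : n) :
    ((Vᴴ * A * V) k k).re
      = ∑ i, Complex.normSq ((Vᴴ * (hA.eigenvectorUnitary : Matrix n n ℂ)) k i)
        * hA.eigenvalues i := by
  rw [← hv_diag, ← hv_spec hA]

open Matrix in
theorem hv_diag_self {n : Type*} [Fintype n] [DecidableEq n] {A : Matrix n n ℂ}
    (hA : A.IsHermitian) (k : n) :
    (((hA.eigenvectorUnitary : Matrix n n ℂ)ᴴ * A * (hA.eigenvectorUnitary : Matrix n n ℂ)) k k).re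
      = hA.eigenvalues k := by
  rw [hv_diag' hA, hv_unit hA, Finset.sum_eq_single k]
  · simp
  · intro i _ hi; simp [one_apply_ne hi.symm]
  · simp

open Matrix in
theorem hv_supp {n : Type*} [Fintype n] [DecidableEq n] {A B : Matrix n n ℂ}
    (hA : A.PosSemidef) (hB : B.IsHermitian) (c : ℝ) (hc : 0 < c)
    (h : (B - (c : ℂ) • A).PosSemidef) (i k : n) (hk : hB.eigenvalues k = 0) :
    Complex.normSq (((hB.eigenvectorUnitary : Matrix n n ℂ)ᴴ *
      (hA.1.eigenvectorUnitary : Matrix n n ℂ)) k i) * hA.1.eigenvalues i = 0 := by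
  have h1 := h.conjTranspose_mul_mul_same (hB.eigenvectorUnitary : Matrix n n ℂ)
  have h2 := (Complex.le_def.1 (h1.diag_nonneg (i := k))).1
  rw [mul_sub, sub_mul, Matrix.sub_apply, Complex.sub_re, hv_diag_self hB, hk, mul_smul_comm,
    smul_mul_assoc, Matrix.smul_apply, smul_eq_mul, Complex.re_ofReal_mul, hv_diag' hA.1] at h2
  have h3 : ∀ i ∈ Finset.univ, 0 ≤ Complex.normSq (((hB.eigenvectorUnitary : Matrix n n ℂ)ᴴ *
      (hA.1.eigenvectorUnitary : Matrix n n ℂ)) k i) * hA.1.eigenvalues i := fun i _ =>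
    mul_nonneg (Complex.normSq_nonneg _) (hA.eigenvalues_nonneg i)
  have h4 := Finset.sum_nonneg h3
  simp only [Complex.zero_re, zero_sub] at h2
  exact (Finset.sum_eq_zero_iff_of_nonneg h3).1 (le_antisymm (by nlinarith) h4) i
    (Finset.mem_univ i)

open Matrix in
theorem hvRel_eq {n : Type*} [Fintype n] [DecidableEq n] {A B : Matrix n n ℂ}
    (hA : A.IsHermitian) (hB : B.IsHermitian) :
    hvRel hA hB = ∑ i, hA.eigenvalues i * Real.log (hA.eigenvalues i)
      - ∑ k, Real.log (hB.eigenvalues k) * (((hB.eigenvectorUnitary : Matrix n n ℂ)ᴴ * A *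
        (hB.eigenvectorUnitary : Matrix n n ℂ)) k k).re := by
  simp only [hv_diag' hA, Finset.mul_sum]
  rw [Finset.sum_comm, ← Finset.sum_sub_distrib]
  unfold hvRel hvD
  refine Finset.sum_congr rfl fun i _ => ?_
  rw [← one_mul (hA.eigenvalues i * _), ← hv_W_sum _ _ (hv_unit hA) (hv_unit hB) i,
    Finset.sum_mul, ← Finset.sum_sub_distrib]
  refine Finset.sum_congr rfl fun k _ => ?_
  ring

theorem hv_ent {n : Type*} [Fintype n] [DecidableEq n] {A : Matrix n n ℂ} (hA : A.IsHermitian) :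
    vnEntropy A = -(∑ i, hA.eigenvalues i * Real.log (hA.eigenvalues i)) / Real.log 2 := by
  rw [vnEntropy, dif_pos hA, neg_div, Finset.sum_div]
  simp only [Real.logb, mul_div_assoc]

open Matrix in
theorem hv_holevo {n : Type*} [Fintype n] [DecidableEq n] {m : ℕ} (q : Fin m → ℝ)
    (A : Fin m → Matrix n n ℂ) (hA : ∀ j, (A j).IsHermitian)
    (hB : (∑ j, (q j : ℂ) • A j).IsHermitian) :
    vnEntropy (∑ j, (q j : ℂ) • A j) - ∑ j, q j * vnEntropy (A j)
      = (∑ j, q j * hvRel (hA j) hB) / Real.log 2 := by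
  have key : ∑ k, hB.eigenvalues k * Real.log (hB.eigenvalues k)
      = ∑ j, q j * ∑ k, Real.log (hB.eigenvalues k) *
        (((hB.eigenvectorUnitary : Matrix n n ℂ)ᴴ * A j *
        (hB.eigenvectorUnitary : Matrix n n ℂ)) k k).re := by
    simp only [Finset.mul_sum]
    rw [Finset.sum_comm]
    refine Finset.sum_congr rfl fun k _ => ?_
    have : hB.eigenvalues k = ∑ j, q j * (((hB.eigenvectorUnitary : Matrix n n ℂ)ᴴ * A j *
        (hB.eigenvectorUnitary : Matrix n n ℂ)) k k).re := by
      rw [← hv_diag_self hB k]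
      generalize (hB.eigenvectorUnitary : Matrix n n ℂ) = V
      rw [Finset.mul_sum, Finset.sum_mul, Matrix.sum_apply, Complex.re_sum]
      refine Finset.sum_congr rfl fun j _ => ?_
      rw [mul_smul_comm, smul_mul_assoc, Matrix.smul_apply, smul_eq_mul, Complex.re_ofReal_mul]
    refine (congrArg (· * Real.log (hB.eigenvalues k)) this).trans ?_
    rw [Finset.sum_mul]
    refine Finset.sum_congr rfl fun j _ => ?_
    ring
  rw [hv_ent hB, key]
  simp only [fun j => hv_ent (hA j), hvRel_eq, mul_sub, Finset.sum_sub_distrib]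
  rw [sub_div, neg_div]
  simp only [neg_div, mul_neg, Finset.sum_neg_distrib, ← mul_div_assoc, ← Finset.sum_div]
  ring

open Matrix in
theorem hv_ptrace_psd {dA dB : ℕ} {ρ : Matrix (Fin dA × Fin dB) (Fin dA × Fin dB) ℂ}
    (h : ρ.PosSemidef) : (ptraceB ρ).PosSemidef := by
  have : ptraceB ρ = ∑ k, ρ.submatrix (fun i => (i, k)) (fun i => (i, k)) := by
    ext i j
    simp [ptraceB, Matrix.sum_apply]
  rw [this]
  exact posSemidef_sum _ fun k _ => h.submatrix _

theorem hv_ptrace_trace {dA dB : ℕ} (ρ : Matrix (Fin dA × Fin dB) (Fin dA × Fin dB) ℂ) :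
    (ptraceB ρ).trace = ρ.trace := by
  simp [ptraceB, Matrix.trace, Fintype.sum_prod_type]

theorem hv_ptrace_sub {dA dB : ℕ} (ρ σ : Matrix (Fin dA × Fin dB) (Fin dA × Fin dB) ℂ) (c : ℂ) :
    ptraceB (σ - c • ρ) = ptraceB σ - c • ptraceB ρ := by
  ext i j
  simp [ptraceB, Finset.mul_sum]

theorem hv_ptrace_sum {dA dB m : ℕ} (q : Fin m → ℂ)
    (ρ : Fin m → Matrix (Fin dA × Fin dB) (Fin dA × Fin dB) ℂ) :
    ptraceB (∑ j, q j • ρ j) = ∑ j, q j • ptraceB (ρ j) := by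
  ext i j
  simp only [ptraceB, Finset.mul_sum, Matrix.sum_apply, Matrix.smul_apply, Matrix.of_apply,
    smul_eq_mul]
  rw [Finset.sum_comm]

theorem hv_ev_sum {n : Type*} [Fintype n] [DecidableEq n] {A : Matrix n n ℂ}
    (hA : A.IsHermitian) (h : A.trace = 1) : ∑ i, hA.eigenvalues i = 1 := by
  rw [hA.trace_eq_sum_eigenvalues] at h
  have h2 := congrArg Complex.re h
  rw [Complex.re_sum] at h2
  simpa using h2

theorem hvRel_mono {dA dB : ℕ} {ρ σ : Matrix (Fin dA × Fin dB) (Fin dA × Fin dB) ℂ}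
    (hρ : ρ.PosSemidef) (hσ : σ.PosSemidef) (ht : ρ.trace = 1) (c : ℝ) (hc : 0 < c)
    (h : (σ - (c : ℂ) • ρ).PosSemidef) (h1 : (ptraceB ρ).IsHermitian)
    (h2 : (ptraceB σ).IsHermitian) :
    hvRel h1 h2 ≤ hvRel hρ.1 hσ.1 := by
  have h' := hv_ptrace_psd h
  rw [hv_ptrace_sub] at h'
  have pρ := hv_ptrace_psd hρ
  have pσ := hv_ptrace_psd hσ
  refine hvD_mono _ _ _ _ (hv_unit _) (hv_unit _) (hv_unit _) (hv_unit _)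
    _ _ hρ.eigenvalues_nonneg hσ.eigenvalues_nonneg (hv_ev_sum _ ht)
    _ _ pρ.eigenvalues_nonneg pσ.eigenvalues_nonneg (hv_ev_sum _ (by rw [hv_ptrace_trace, ht]))
    (hv_supp hρ hσ.1 c hc h) (hv_supp pρ pσ.1 c hc h') ?_
  intro t ht
  obtain ⟨X, hX⟩ := hv_val_attain ht _ _ (hv_unit h1) (hv_unit h2) _ _
    pρ.eigenvalues_nonneg pσ.eigenvalues_nonneg
  rw [← hX, ← hv_spec h1, ← hv_spec h2, hv_val_ptrace]
  conv_lhs => rw [hv_spec hρ.1, hv_spec hσ.1]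
  exact hv_val_le ht _ _ _ (hv_unit _) (hv_unit _) _ _ hρ.eigenvalues_nonneg hσ.eigenvalues_nonneg

/-- monotonicity of the Holevo information under partial trace. -/
theorem holevo_mono_ptrace {dA dB m : ℕ}
    (q : Fin m → ℝ) (hq : ∀ j, 0 ≤ q j) (hqs : ∑ j, q j = 1)
    (ρ : Fin m → Matrix (Fin dA × Fin dB) (Fin dA × Fin dB) ℂ)
    (hρ : ∀ j, IsDensityMatrix (ρ j)) :
    vnEntropy (∑ j, (q j : ℂ) • ptraceB (ρ j)) - ∑ j, q j * vnEntropy (ptraceB (ρ j)) ≤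
      vnEntropy (∑ j, (q j : ℂ) • ρ j) - ∑ j, q j * vnEntropy (ρ j) := by
  have hs : ∀ s : Finset (Fin m), (∑ j ∈ s, (q j : ℂ) • ρ j).PosSemidef := fun s =>
    Matrix.posSemidef_sum _ fun j _ => (hρ j).1.smul (by exact_mod_cast hq j)
  have hB := hs Finset.univ
  have hA' := fun j => (hv_ptrace_psd (hρ j).1)
  have hB' := hv_ptrace_psd hB
  rw [hv_holevo q ρ (fun j => (hρ j).1.1) hB.1]
  have e := hv_ptrace_sum (fun j => (q j : ℂ)) ρ
  rw [hv_holevo q (fun j => ptraceB (ρ j)) (fun j => (hA' j).1) (e ▸ hB'.1)]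
  refine div_le_div_of_nonneg_right ?_ (Real.log_nonneg (by norm_num))
  refine Finset.sum_le_sum fun j _ => ?_
  rcases (hq j).eq_or_lt with h | h
  · simp [← h]
  · refine mul_le_mul_of_nonneg_left ?_ (hq j)
    have h3 : ((∑ j, (q j : ℂ) • ρ j) - (q j : ℂ) • ρ j).PosSemidef := by
      rw [← Finset.sum_erase_eq_sub (Finset.mem_univ j)]
      exact hs _
    have key := hvRel_mono (hρ j).1 hB (hρ j).2 (q j) h h3 (hA' j).1
    rw [e] at key
    exact key _
end

section
/- Steering (Schrödinger–HJW) theorem: let ψ : Fin dA × Fin dC → ℂ be a unit vector and let ρ be the dA×dA density matrix with entries ρ_{x y} = ∑_c ψ(x,c)·conj(ψ(y,c)). Then for every finite decomposition ρ = ∑_{i=1}^m p_i v_i v_i† with p_i ≥ 0, ∑_i p_i = 1 and unit vectors v_i ∈ ℂ^{dA}, there exists a POVM (M_1,…,M_m) on ℂ^{dC} (each M_i positive semidefinite and ∑_i M_i = 1) such that for each i the dA×dA matrix with entries ∑_{c,c'} M_i(c,c')·ψ(x,c')·conj(ψ(y,c)) equals p_i v_i v_i†. -/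
open scoped ComplexConjugate ComplexOrder

theorem ginv_aux {n : Type*} [Fintype n] [DecidableEq n] (G : Matrix n n ℂ)
    (hG : G.IsHermitian) : ∃ H : Matrix n n ℂ, (H * G).IsHermitian ∧ G * (H * G) = G := by
  obtain ⟨U, D, hU, hGe⟩ : ∃ (U : Matrix n n ℂ) (d : n → ℝ), star U * U = 1 ∧
      G = U * Matrix.diagonal (fun i => (d i : ℂ)) * star U := by
    refine ⟨hG.eigenvectorUnitary, hG.eigenvalues, ?_, ?_⟩
    · exact Unitary.coe_star_mul_self _
    · have := hG.spectral_theorem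
      rw [Unitary.conjStarAlgAut_apply] at this
      exact this
  have key : (U * Matrix.diagonal (fun i => (D i : ℂ)⁻¹) * star U) * G
      = U * Matrix.diagonal (fun i => (D i : ℂ)⁻¹ * (D i : ℂ)) * star U := by
    rw [hGe, ← Matrix.diagonal_mul_diagonal]
    calc _ = U * Matrix.diagonal (fun i => (D i : ℂ)⁻¹) * (star U * U) *
              Matrix.diagonal (fun i => (D i : ℂ)) * star U := by noncomm_ring
      _ = _ := by rw [hU]; noncomm_ring
  refine ⟨U * Matrix.diagonal (fun i => (D i : ℂ)⁻¹) * star U, ?_, ?_⟩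
  · rw [key, Matrix.star_eq_conjTranspose]
    apply Matrix.isHermitian_mul_mul_conjTranspose
    apply Matrix.isHermitian_diagonal_of_self_adjoint
    ext i
    simp
  · rw [key]
    nth_rw 1 [hGe]
    calc _ = U * Matrix.diagonal (fun i => (D i : ℂ)) * (star U * U) *
              Matrix.diagonal (fun i => (D i : ℂ)⁻¹ * (D i : ℂ)) * star U := by noncomm_ring
      _ = U * (Matrix.diagonal (fun i => (D i : ℂ)) *
              Matrix.diagonal (fun i => (D i : ℂ)⁻¹ * (D i : ℂ))) * star U := by
            rw [hU]; noncomm_ring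
      _ = G := by
        rw [Matrix.diagonal_mul_diagonal, hGe]
        congr 3
        ext i
        by_cases h : (D i : ℂ) = 0
        · simp [h]
        · field_simp

open Matrix in
theorem pinv_aux {a c : Type*} [Fintype a] [Fintype c] [DecidableEq c] (A : Matrix a c ℂ) :
    ∃ X : Matrix c a ℂ, (X * A).IsHermitian ∧ A * (X * A) = A := by
  obtain ⟨H, h1, h2⟩ := ginv_aux (Aᴴ * A) (isHermitian_conjTranspose_mul_self A)
  refine ⟨H * Aᴴ, by rwa [Matrix.mul_assoc], ?_⟩
  rw [Matrix.mul_assoc H]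
  have : Aᴴ * (A * (H * (Aᴴ * A)) - A) = 0 := by
    rw [Matrix.mul_sub, ← Matrix.mul_assoc, h2, sub_self]
  rw [← sub_eq_zero, ← conjTranspose_mul_self_eq_zero]
  have e : A * (H * (Aᴴ * A)) - A = A * (H * (Aᴴ * A) - 1) := by
    rw [Matrix.mul_sub, Matrix.mul_one]
  nth_rw 1 [e]
  rw [conjTranspose_mul, Matrix.mul_assoc, this, Matrix.mul_zero]

open Matrix in
theorem steer_aux {a c m : Type*} [Fintype a] [Fintype c] [Fintype m] [DecidableEq c]
    [DecidableEq a] (A : Matrix a c ℂ) (W : Matrix a m ℂ) (h : A * Aᴴ = W * Wᴴ) :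
    ∃ (K : Matrix c m ℂ) (P : Matrix c c ℂ), P.PosSemidef ∧ A * K = W ∧ A * P = 0 ∧
      K * Kᴴ + P = 1 := by
  obtain ⟨X, h1, h2⟩ := pinv_aux A
  have h3 : (X * A) * (X * A) = X * A := by rw [Matrix.mul_assoc, h2]
  refine ⟨X * W, 1 - X * A, ?_, ?_, ?_, ?_⟩
  · have e : 1 - X * A = (1 - X * A)ᴴ * (1 - X * A) := by
      rw [conjTranspose_sub, h1.eq, conjTranspose_one, Matrix.mul_sub, Matrix.sub_mul _ _ (X * A), h3]
      simp
    rw [e]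
    exact posSemidef_conjTranspose_mul_self _
  · have e : (1 - A * X) * W = 0 := by
      rw [← self_mul_conjTranspose_eq_zero, conjTranspose_mul, ← Matrix.mul_assoc,
        Matrix.mul_assoc _ W, ← h, ← Matrix.mul_assoc, Matrix.sub_mul, Matrix.mul_assoc A X A, h2]
      simp
    rw [Matrix.sub_mul, Matrix.one_mul, sub_eq_zero] at e
    rw [← Matrix.mul_assoc, ← e]
  · rw [Matrix.mul_sub, h2]; simp
  · rw [conjTranspose_mul, ← Matrix.mul_assoc, Matrix.mul_assoc X, ← h, ← Matrix.mul_assoc,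
      Matrix.mul_assoc (X * A), ← conjTranspose_mul, h1.eq, h3]
    simp

/-- the steering (Schrödinger–HJW) theorem. -/
theorem steering {dA dC m : ℕ}
    (ψ : Fin dA × Fin dC → ℂ) (hψ : ∑ x, ‖ψ x‖ ^ 2 = 1)
    (ρ : Matrix (Fin dA) (Fin dA) ℂ)
    (hρ : ρ = Matrix.of fun x y => ∑ c, ψ (x, c) * conj (ψ (y, c)))
    (p : Fin m → ℝ) (hp : ∀ i, 0 ≤ p i) (hpsum : ∑ i, p i = 1)
    (v : Fin m → Fin dA → ℂ) (hv : ∀ i, ∑ x, ‖v i x‖ ^ 2 = 1)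
    (hdecomp : ρ = ∑ i, (p i : ℂ) • Matrix.of fun x y => v i x * conj (v i y)) :
    ∃ M : Fin m → Matrix (Fin dC) (Fin dC) ℂ,
      (∀ i, (M i).PosSemidef) ∧ (∑ i, M i = 1) ∧
      ∀ i, (Matrix.of fun x y => ∑ c, ∑ c', M i c c' * ψ (x, c') * conj (ψ (y, c)))
            = (p i : ℂ) • Matrix.of fun x y => v i x * conj (v i y) := by
  classical
  let A : Matrix (Fin dA) (Fin dC) ℂ := Matrix.of fun x c => ψ (x, c)
  let W : Matrix (Fin dA) (Fin m) ℂ := Matrix.of fun x i => (Real.sqrt (p i) : ℂ) * v i x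
  have hs : ∀ i, (Real.sqrt (p i) : ℂ) * (Real.sqrt (p i) : ℂ) = p i := fun i => by
    rw [← Complex.ofReal_mul, Real.mul_self_sqrt (hp i)]
  have hW : ∀ i x y, W x i * conj (W y i) = p i * (v i x * conj (v i y)) := fun i x y => by
    simp only [W, Matrix.of_apply, map_mul, Complex.conj_ofReal]
    rw [← hs]; ring
  have h : A * A.conjTranspose = W * W.conjTranspose := by
    ext x y
    have := congrFun (congrFun (hρ.symm.trans hdecomp) x) y
    simp only [Matrix.of_apply, Matrix.sum_apply, Matrix.smul_apply, smul_eq_mul] at this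
    rw [Matrix.mul_apply, Matrix.mul_apply]
    refine this.trans ?_
    exact Finset.sum_congr rfl fun i _ => (hW i x y).symm
  obtain ⟨K, P, hP, hAK, hAP, hsum⟩ := steer_aux A W h
  let N : Fin m → Matrix (Fin dC) (Fin dC) ℂ := fun i =>
    Matrix.vecMulVec (fun c => K c i) (star fun c => K c i) + (p i : ℂ) • P
  refine ⟨fun i => (N i).transpose, fun i => ?_, ?_, fun i => ?_⟩
  · apply Matrix.PosSemidef.transpose
    apply Matrix.PosSemidef.add
    · exact Matrix.posSemidef_vecMulVec_self_star _
    · exact hP.smul (by exact_mod_cast hp i)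
  · rw [← Matrix.transpose_sum, ← Matrix.transpose_one]
    congr 1
    rw [← hsum, Finset.sum_add_distrib, ← Finset.sum_smul, ← Complex.ofReal_sum, hpsum]
    congr 1
    · ext x y
      simp [Matrix.sum_apply, Matrix.mul_apply, Matrix.vecMulVec_apply]
    · simp
  · have e : A * N i * A.conjTranspose
        = Matrix.vecMulVec (fun c => W c i) (star fun c => W c i) := by
      have hw : (fun x => W x i) = A.mulVec (fun c => K c i) := by
        rw [← hAK]; rfl
      rw [Matrix.mul_add, Matrix.mul_smul, hAP, smul_zero, add_zero, Matrix.mul_vecMulVec,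
        Matrix.vecMulVec_mul, hw, Matrix.star_mulVec]
    ext x y
    have e' := congrFun (congrFun e x) y
    rw [Matrix.vecMulVec_apply, Matrix.mul_apply] at e'
    simp only [Matrix.of_apply, Matrix.smul_apply, smul_eq_mul]
    rw [← hW]
    refine Eq.trans ?_ e'
    refine Finset.sum_congr rfl fun c _ => ?_
    rw [Matrix.mul_apply, Finset.sum_mul]
    refine Finset.sum_congr rfl fun c' _ => ?_
    simp only [Matrix.transpose_apply, Matrix.conjTranspose_apply, A, Matrix.of_apply]
    rw [mul_comm (N i c' c)]
    rfl
end

section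
/- Single-copy upper bound on the entanglement of assistance: let ρ be a density matrix with rows and columns indexed by Fin dA × Fin dB. Then for every finite decomposition ρ = ∑_{i=1}^m p_i v_i v_i† with p_i ≥ 0, ∑_i p_i = 1 and unit vectors v_i, the average entanglement satisfies ∑_i p_i E(v_i) ≤ min{ S(tr_B ρ), S(tr_A ρ) }. -/
open scoped ComplexConjugate ComplexOrder

/-- The entropy of entanglement of a bipartite pure-state vector:
the entropy of its reduced state on the first factor. -/
noncomputable def entE {dA dB : ℕ} (v : Fin dA × Fin dB → ℂ) : ℝ :=
  vnEntropy (Matrix.of fun i i' => ∑ k, v (i, k) * conj (v (i', k)))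

open scoped Matrix in
theorem aux_diag {n : Type*} [Fintype n] [DecidableEq n] (σ : Matrix n n ℂ) (h : σ.IsHermitian)
    (U : Matrix n n ℂ) (j : n) :
    (Uᴴ * σ * U) j j = ((∑ k, ‖(Uᴴ * (h.eigenvectorUnitary : Matrix n n ℂ)) j k‖ ^ 2 * h.eigenvalues k : ℝ) : ℂ) := by
  have hs := h.spectral_theorem
  rw [Unitary.conjStarAlgAut_apply] at hs
  set W : Matrix n n ℂ := (h.eigenvectorUnitary : Matrix n n ℂ) with hW
  have e : Uᴴ * σ * U = (Uᴴ * W) * Matrix.diagonal (fun k => (h.eigenvalues k : ℂ)) * (Uᴴ * W)ᴴ := by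
    conv_lhs => rw [hs]
    simp only [Matrix.conjTranspose_mul, Matrix.conjTranspose_conjTranspose, Matrix.mul_assoc]
    rfl
  rw [e, Matrix.mul_apply]
  push_cast
  refine Finset.sum_congr rfl fun k _ => ?_
  rw [Matrix.mul_diagonal, Matrix.conjTranspose_apply, ← Complex.mul_conj']
  simp only [RCLike.star_def]
  ring

theorem vnEntropy_eq {n : Type*} [Fintype n] [DecidableEq n] (σ : Matrix n n ℂ) (h : σ.IsHermitian) :
    vnEntropy σ = (∑ i, Real.negMulLog (h.eigenvalues i)) / Real.log 2 := by
  rw [vnEntropy, dif_pos h, ← Finset.sum_neg_distrib, Finset.sum_div]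
  refine Finset.sum_congr rfl fun i _ => ?_
  rw [Real.negMulLog, Real.logb]; ring

open scoped Matrix in
theorem norm_row {n : Type*} [Fintype n] [DecidableEq n] (V : Matrix n n ℂ) (h : V * Vᴴ = 1) (j : n) :
    ∑ k, ‖V j k‖ ^ 2 = 1 := by
  have := congrFun (congrFun h j) j
  rw [Matrix.mul_apply, Matrix.one_apply_eq] at this
  have h2 : ((∑ k, ‖V j k‖ ^ 2 : ℝ) : ℂ) = 1 := by
    rw [← this]; push_cast
    refine Finset.sum_congr rfl fun k _ => ?_
    rw [Matrix.conjTranspose_apply, ← Complex.mul_conj']; rfl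
  exact_mod_cast h2

open scoped Matrix in
theorem aux_pinch {n : Type*} [Fintype n] [DecidableEq n] (σ : Matrix n n ℂ) (h : σ.PosSemidef)
    (U : Matrix n n ℂ) (hU : Uᴴ * U = 1) :
    ∑ i, Real.negMulLog (h.1.eigenvalues i) ≤ ∑ j, Real.negMulLog ((Uᴴ * σ * U) j j).re := by
  set W : Matrix n n ℂ := (h.1.eigenvectorUnitary : Matrix n n ℂ) with hW
  have hW1 : Wᴴ * W = 1 := Unitary.coe_star_mul_self h.1.eigenvectorUnitary
  have hW2 : W * Wᴴ = 1 := mul_eq_one_comm.mp hW1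
  have hU2 : U * Uᴴ = 1 := mul_eq_one_comm.mp hU
  have hV : (Uᴴ * W) * (Uᴴ * W)ᴴ = 1 := by
    rw [Matrix.conjTranspose_mul, Matrix.conjTranspose_conjTranspose, Matrix.mul_assoc,
      ← Matrix.mul_assoc W, hW2, Matrix.one_mul, hU]
  have hV2 : (Uᴴ * W)ᴴ * (Uᴴ * W) = 1 := mul_eq_one_comm.mp hV
  have row := norm_row _ hV
  have col : ∀ k, ∑ j, ‖(Uᴴ * W) j k‖ ^ 2 = 1 := by
    intro k
    have := norm_row (Uᴴ * W)ᴴ (by rw [Matrix.conjTranspose_conjTranspose]; exact hV2) k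
    rw [← this]
    refine Finset.sum_congr rfl fun j _ => ?_
    rw [Matrix.conjTranspose_apply, norm_star]
  calc _ = ∑ k, (∑ j, ‖(Uᴴ * W) j k‖ ^ 2) * Real.negMulLog (h.1.eigenvalues k) := by
        simp only [col, one_mul]
    _ = ∑ j, ∑ k, ‖(Uᴴ * W) j k‖ ^ 2 * Real.negMulLog (h.1.eigenvalues k) := by
        simp only [Finset.sum_mul]; exact Finset.sum_comm
    _ ≤ _ := by
        refine Finset.sum_le_sum fun j _ => ?_
        rw [aux_diag σ h.1 U j, Complex.ofReal_re]
        have := Real.concaveOn_negMulLog.le_map_sum (t := Finset.univ)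
          (w := fun k => ‖(Uᴴ * W) j k‖ ^ 2) (p := h.1.eigenvalues)
          (fun k _ => by positivity) (row j) (fun k _ => h.eigenvalues_nonneg k)
        simpa only [smul_eq_mul] using this

open scoped Matrix in
theorem aux_concave {n : Type*} [Fintype n] [DecidableEq n] {m : ℕ} (p : Fin m → ℝ)
    (hp : ∀ i, 0 ≤ p i) (hpsum : ∑ i, p i = 1) (σ : Fin m → Matrix n n ℂ)
    (h : ∀ i, (σ i).PosSemidef) (τ : Matrix n n ℂ) (hτ : τ = ∑ i, (p i : ℂ) • σ i) :
    ∑ i, p i * vnEntropy (σ i) ≤ vnEntropy τ := by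
  have hH : τ.IsHermitian := by
    rw [hτ, Matrix.IsHermitian, Matrix.conjTranspose_sum]
    refine Finset.sum_congr rfl fun i _ => ?_
    rw [Matrix.conjTranspose_smul, (h i).1.eq]
    simp
  set U : Matrix n n ℂ := (hH.eigenvectorUnitary : Matrix n n ℂ) with hUd
  have hU : Uᴴ * U = 1 := Unitary.coe_star_mul_self hH.eigenvectorUnitary
  have hdiag : ∀ j, hH.eigenvalues j = ∑ i, p i * ((Uᴴ * σ i * U) j j).re := by
    intro j
    have e := aux_diag τ hH U j
    rw [← hUd, hU] at e
    have e2 : (Uᴴ * τ * U) j j = (hH.eigenvalues j : ℂ) := by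
      rw [e]; congr 1
      rw [Finset.sum_eq_single j]
      · simp
      · intro k _ hk; simp [Matrix.one_apply_ne hk.symm]
      · simp
    have e3 : (Uᴴ * τ * U) j j = ∑ i, (p i : ℂ) * (Uᴴ * σ i * U) j j := by
      rw [hτ, Matrix.mul_sum, Matrix.sum_mul, Matrix.sum_apply]
      refine Finset.sum_congr rfl fun i _ => ?_
      simp
    have := congrArg Complex.re (e2.symm.trans e3)
    simpa using this
  have hlog : 0 < Real.log 2 := Real.log_pos (by norm_num)
  rw [vnEntropy_eq τ hH]
  have : ∑ i, p i * vnEntropy (σ i) =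
      (∑ i, p i * ∑ j, Real.negMulLog ((h i).1.eigenvalues j)) / Real.log 2 := by
    rw [Finset.sum_div]
    refine Finset.sum_congr rfl fun i _ => ?_
    rw [vnEntropy_eq _ (h i).1]; ring
  rw [this]
  refine div_le_div_of_nonneg_right ?_ hlog.le
  calc _ ≤ ∑ i, p i * ∑ j, Real.negMulLog ((Uᴴ * σ i * U) j j).re :=
        Finset.sum_le_sum fun i _ => mul_le_mul_of_nonneg_left (aux_pinch _ (h i) U hU) (hp i)
    _ = ∑ j, ∑ i, p i * Real.negMulLog ((Uᴴ * σ i * U) j j).re := by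
        simp only [Finset.mul_sum]; exact Finset.sum_comm
    _ ≤ _ := by
        refine Finset.sum_le_sum fun j _ => ?_
        rw [hdiag j]
        have := Real.concaveOn_negMulLog.le_map_sum (t := Finset.univ)
          (w := p) (p := fun i => ((Uᴴ * σ i * U) j j).re)
          (fun k _ => hp k) hpsum (fun i _ => by
            have := ((h i).conjTranspose_mul_mul_same U).diag_nonneg (i := j)
            exact (Complex.le_def.mp this).1)
        simpa only [smul_eq_mul] using this

theorem vnEntropy_roots {n : Type*} [Fintype n] [DecidableEq n] (σ : Matrix n n ℂ)
    (h : σ.IsHermitian) :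
    vnEntropy σ = (σ.charpoly.roots.map fun z => Real.negMulLog z.re).sum / Real.log 2 := by
  rw [vnEntropy_eq σ h, h.roots_charpoly_eq_eigenvalues, Multiset.map_map]
  rfl

open scoped Matrix in
theorem aux_swap {a b : Type*} [Fintype a] [DecidableEq a] [Fintype b] [DecidableEq b]
    (M : Matrix a b ℂ) : vnEntropy (M * Mᴴ) = vnEntropy (Mᵀ * Mᵀᴴ) := by
  rw [vnEntropy_roots _ (Matrix.isHermitian_mul_conjTranspose_self M),
    vnEntropy_roots _ (Matrix.isHermitian_mul_conjTranspose_self Mᵀ)]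
  have e : Mᵀ * Mᵀᴴ = (Mᴴ * M)ᵀ := by
    rw [Matrix.transpose_mul]; rfl
  rw [e, Matrix.charpoly_transpose]
  have hc := congrArg (fun q : Polynomial ℂ => (q.roots.map fun z => Real.negMulLog z.re).sum)
    (Matrix.charpoly_mul_comm' M Mᴴ)
  have key : ∀ (k : ℕ) (q : Polynomial ℂ), q.Monic →
      ((Polynomial.X ^ k * q).roots.map fun z : ℂ => Real.negMulLog z.re).sum =
      (q.roots.map fun z => Real.negMulLog z.re).sum := by
    intro k q hq
    rw [Polynomial.roots_mul (mul_ne_zero (pow_ne_zero _ Polynomial.X_ne_zero) hq.ne_zero)]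
    simp [Multiset.map_nsmul, Multiset.sum_nsmul]
  rw [key _ _ (Matrix.charpoly_monic _), key _ _ (Matrix.charpoly_monic _)] at hc
  rw [hc]

open scoped Matrix in
theorem average_entanglement_le_min_entropy {dA dB m : ℕ}
    (ρ : Matrix (Fin dA × Fin dB) (Fin dA × Fin dB) ℂ) (hρ : IsDensityMatrix ρ)
    (p : Fin m → ℝ) (hp : ∀ i, 0 ≤ p i) (hpsum : ∑ i, p i = 1)
    (v : Fin m → Fin dA × Fin dB → ℂ) (hv : ∀ i, ∑ x, ‖v i x‖ ^ 2 = 1)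
    (hdecomp : ρ = ∑ i, (p i : ℂ) • Matrix.of fun x y => v i x * conj (v i y)) :
    ∑ i, p i * entE (v i) ≤ min (vnEntropy (ptraceB ρ)) (vnEntropy (ptraceA ρ)) := by
  let M : Fin m → Matrix (Fin dA) (Fin dB) ℂ := fun i => Matrix.of fun a b => v i (a, b)
  have hE : ∀ i, entE (v i) = vnEntropy (M i * (M i)ᴴ) := fun i => rfl
  refine le_min ?_ ?_
  · simp only [hE]
    refine aux_concave p hp hpsum _ (fun i => Matrix.posSemidef_self_mul_conjTranspose _) _ ?_
    ext a a'
    simp only [ptraceB, hdecomp, Matrix.of_apply, Matrix.sum_apply, Matrix.smul_apply, smul_eq_mul]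
    rw [Finset.sum_comm]
    refine Finset.sum_congr rfl fun i _ => ?_
    rw [← Finset.mul_sum]; rfl
  · have hE2 : ∀ i, entE (v i) = vnEntropy ((M i)ᵀ * (M i)ᵀᴴ) := fun i => (hE i).trans (aux_swap _)
    simp only [hE2]
    refine aux_concave p hp hpsum _ (fun i => Matrix.posSemidef_self_mul_conjTranspose _) _ ?_
    ext a a'
    simp only [ptraceA, hdecomp, Matrix.of_apply, Matrix.sum_apply, Matrix.smul_apply, smul_eq_mul]
    rw [Finset.sum_comm]
    refine Finset.sum_congr rfl fun i _ => ?_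
    rw [← Finset.mul_sum]; rfl
end

section
/- Every state in the antisymmetric subspace of ℂ³⊗ℂ³ is a singlet: if M is a 3×3 complex matrix with Mᵀ = −M and Frobenius norm 1 (∑_{i,k}|M_{ik}|² = 1), then the multiset of eigenvalues of M M† is {1/2, 1/2, 0}; in particular the entropy of entanglement of the bipartite pure state with coefficient matrix M equals 1. -/
open Matrix
open scoped ComplexConjugate ComplexOrder

/-- every state in the antisymmetric subspace of ℂ³⊗ℂ³ is a singlet:
its reduced state `M Mᴴ` has eigenvalues `{1/2, 1/2, 0}` and entanglement entropy 1. -/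
theorem antisymmetric_is_singlet (M : Matrix (Fin 3) (Fin 3) ℂ)
    (hanti : Mᵀ = -M) (hnorm : ∑ i, ∑ k, ‖M i k‖ ^ 2 = 1)
    (h : (M * Mᴴ).IsHermitian) :
    Finset.univ.val.map h.eigenvalues = ({1/2, 1/2, 0} : Multiset ℝ) ∧
      vnEntropy (M * Mᴴ) = 1 := by
  have e : ∀ i j, M j i = - M i j := fun i j => by
    have := congrFun (congrFun hanti i) j
    simpa using this
  have d : ∀ i, M i i = 0 := fun i => self_eq_neg.mp (e i i)
  obtain ⟨a, ha⟩ : ∃ a, a = M 0 1 := ⟨_, rfl⟩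
  obtain ⟨b, hb⟩ : ∃ b, b = M 0 2 := ⟨_, rfl⟩
  obtain ⟨c, hc⟩ : ∃ c, c = M 1 2 := ⟨_, rfl⟩
  have hM : M = !![0, a, b; -a, 0, c; -b, -c, 0] := by
    ext i j
    fin_cases i <;> fin_cases j <;> simp [d, ha, hb, hc, e 0 1, e 0 2, e 1 2]
  have hs : a * conj a + b * conj b + c * conj c = 1 / 2 := by
    have h1 : ‖a‖ ^ 2 + ‖b‖ ^ 2 + ‖c‖ ^ 2 = 1 / 2 := by
      rw [hM] at hnorm
      simp [Fin.sum_univ_three] at hnorm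
      linarith
    rw [Complex.mul_conj', Complex.mul_conj', Complex.mul_conj']
    have h2 : ((‖a‖ ^ 2 + ‖b‖ ^ 2 + ‖c‖ ^ 2 : ℝ) : ℂ) = ((1 / 2 : ℝ) : ℂ) := by rw [h1]
    push_cast at h2
    exact h2
  have hchar : (M * Mᴴ).charpoly = Polynomial.X *
      (Polynomial.X - Polynomial.C (1 / 2 : ℂ)) ^ 2 := by
    rw [← hs, hM, Matrix.charpoly, Matrix.det_fin_three]
    simp only [Matrix.charmatrix_apply, Matrix.mul_apply, Matrix.conjTranspose_apply,
      Fin.sum_univ_three]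
    simp [Matrix.diagonal, Fin.sum_univ_three]
    ring
  have hroots : (M * Mᴴ).charpoly.roots = ({1 / 2, 1 / 2, 0} : Multiset ℂ) := by
    have : (M * Mᴴ).charpoly = (({1 / 2, 1 / 2, 0} : Multiset ℂ).map
        (fun r => Polynomial.X - Polynomial.C r)).prod := by
      rw [hchar]
      simp only [Multiset.insert_eq_cons, Multiset.map_cons, Multiset.prod_cons,
        Multiset.map_singleton, Multiset.prod_singleton, Polynomial.C_0]
      ring
    rw [this, Polynomial.roots_multiset_prod_X_sub_C]
  have key : Finset.univ.val.map h.eigenvalues = ({1/2, 1/2, 0} : Multiset ℝ) := by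
    apply Multiset.map_injective Complex.ofReal_injective
    rw [h.roots_charpoly_eq_eigenvalues] at hroots
    rw [Multiset.map_map]
    refine Eq.trans ?_ (hroots.trans ?_)
    · rfl
    · simp
  refine ⟨key, ?_⟩
  rw [vnEntropy, dif_pos h]
  have : ∑ i, h.eigenvalues i * Real.logb 2 (h.eigenvalues i) =
      ((Finset.univ.val.map h.eigenvalues).map (fun x => x * Real.logb 2 x)).sum := by
    rw [Multiset.map_map]; rfl
  rw [this, key]
  have hl : Real.logb 2 (1 / 2) = -1 := by
    rw [one_div, Real.logb_inv, Real.logb_self_eq_one (by norm_num)]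
  simp only [Multiset.insert_eq_cons, Multiset.map_cons, Multiset.sum_cons,
    Multiset.map_singleton, Multiset.sum_singleton, hl]
  norm_num
end

section
/- Holevo–Schumacher–Westmoreland random coding theorem (i.i.d. codewords): let W : Fin m → (density matrices on ℂ^d) be a classical–quantum channel, q a probability distribution on Fin m with q_j > 0, and χ = S(∑_j q_j W_j) − ∑_j q_j S(W_j) its Holevo information; assume χ > 0. Then for every ε, δ ∈ (0,1) with δ < χ there exists n₀ such that for all n ≥ n₀ and all N ≥ 1 with log₂ N ≤ n(χ − δ), the following holds: if the codewords U^{(1)},…,U^{(N)} ∈ (Fin m)^n are chosen independently, each with probability ∏_{t=1}^n q_{U_t}, then with probability at least 1 − ε there exists a POVM (D_1,…,D_N) on the d^n-dimensional space (each D_i positive semidefinite, ∑_{i=1}^N D_i ≤ 1) such that (1/N)·∑_{i=1}^N Re(trace(W_{U^{(i)}} D_i)) ≥ 1 − ε, where for U ∈ (Fin m)^n, W_U denotes the tensor-power matrix on (Fin d)^n-indexed space with entries (W_U)_{J,K} = ∏_{t=1}^n (W_{U_t})_{J_t K_t}. -/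
open scoped ComplexConjugate ComplexOrder

/-- The `n`-fold tensor-power matrix `W_{U_1} ⊗ ⋯ ⊗ W_{U_n}` associated to a
codeword `U ∈ (Fin m)^n`, with entries `(W_U)_{J,K} = ∏_t (W_{U_t})_{J_t K_t}`. -/
noncomputable def tensorWord {m d n : ℕ} (W : Fin m → Matrix (Fin d) (Fin d) ℂ)
    (U : Fin n → Fin m) : Matrix (Fin n → Fin d) (Fin n → Fin d) ℂ :=
  Matrix.of fun J K => ∏ t, W (U t) (J t) (K t)

namespace HSW
open Matrix

noncomputable def hs {n k : Type*} [Fintype n] [Fintype k] (X : Matrix n k ℂ) : ℝ :=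
  ((Xᴴ * X).trace).re

section
variable {n k : Type*} [Fintype n] [Fintype k]

lemma hs_eq (X : Matrix n k ℂ) : hs X = ∑ j, ∑ i, ‖X i j‖ ^ 2 := by
  simp only [hs, trace, diag, mul_apply, conjTranspose_apply, Complex.re_sum]
  refine Finset.sum_congr rfl fun j _ => Finset.sum_congr rfl fun i _ => ?_
  rw [← Complex.normSq_eq_norm_sq, Complex.normSq_apply]
  simp

lemma hs_nonneg (X : Matrix n k ℂ) : 0 ≤ hs X := by
  rw [hs_eq]; positivity

lemma hs_add_le (X Y : Matrix n k ℂ) : hs (X + Y) ≤ 2 * hs X + 2 * hs Y := by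
  simp only [hs_eq, Finset.mul_sum, ← Finset.sum_add_distrib]
  gcongr with j _ i _
  have h := norm_add_le (X i j) (Y i j)
  have h0 := norm_nonneg (X i j + Y i j)
  rw [Matrix.add_apply]
  nlinarith [sq_nonneg (‖X i j‖ - ‖Y i j‖)]

lemma hs_neg (X : Matrix n k ℂ) : hs (-X) = hs X := by simp [hs]

lemma hs_sub_ge (A G : Matrix n k ℂ) {η : ℝ} (hη : 0 < η) :
    hs A - η * hs A - hs (A - G) / η ≤ hs G := by
  simp only [hs_eq, Finset.mul_sum, Finset.sum_div, ← Finset.sum_sub_distrib]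
  gcongr with j _ i _
  have h : ‖A i j‖ ≤ ‖G i j‖ + ‖A i j - G i j‖ := by
    have := norm_add_le (G i j) (A i j - G i j)
    simpa using this
  rw [Matrix.sub_apply]
  have hx00 := norm_nonneg (A i j)
  generalize ‖A i j‖ = x at *
  have hy := norm_nonneg (G i j)
  have hz := norm_nonneg (A i j - G i j)
  generalize ‖G i j‖ = y at *
  generalize ‖A i j - G i j‖ = z at *
  by_cases hx : x ≤ z
  · have : x ^ 2 - η * x ^ 2 - z ^ 2 / η ≤ 0 := by
      rcases le_or_gt x 0 with hx0 | hx0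
      · have : x = 0 := le_antisymm hx0 hx00
        subst this
        have := div_nonneg (sq_nonneg z) hη.le
        simp; linarith
      · have h1 : 2 * x * z ≤ η * x ^ 2 + z ^ 2 / η := by
          have : η * x ^ 2 + z ^ 2 / η - 2 * x * z = (η * x - z) ^ 2 / η := by
            field_simp; ring
          have := div_nonneg (sq_nonneg (η * x - z)) hη.le
          linarith
        nlinarith
    nlinarith
  · have h1 : 2 * x * z ≤ η * x ^ 2 + z ^ 2 / η := by
      have : η * x ^ 2 + z ^ 2 / η - 2 * x * z = (η * x - z) ^ 2 / η := by
        field_simp; ring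
      have := div_nonneg (sq_nonneg (η * x - z)) hη.le
      linarith
    nlinarith

variable [DecidableEq n]

structure IsProj (P : Matrix n n ℂ) : Prop where
  herm : Pᴴ = P
  idem : P * P = P

lemma IsProj.one_sub {P : Matrix n n ℂ} (h : IsProj P) : IsProj (1 - P) :=
  ⟨by simp [h.herm], by simp [sub_mul, mul_sub, h.idem]⟩

lemma IsProj.conj_mul {P : Matrix n n ℂ} (h : IsProj P) (X : Matrix n k ℂ) :
    (P * X)ᴴ * (P * X) = Xᴴ * P * X := by
  rw [conjTranspose_mul, h.herm, Matrix.mul_assoc, Matrix.mul_assoc, ← Matrix.mul_assoc P P, h.idem]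

lemma IsProj.pyth {P : Matrix n n ℂ} (h : IsProj P) (X : Matrix n k ℂ) :
    hs X = hs ((1 - P) * X) + hs (P * X) := by
  rw [hs, hs, hs, h.conj_mul, h.one_sub.conj_mul, ← Complex.add_re, ← trace_add]
  simp [Matrix.mul_sub, Matrix.sub_mul]

lemma IsProj.le {P : Matrix n n ℂ} (h : IsProj P) (X : Matrix n k ℂ) : hs (P * X) ≤ hs X := by
  rw [h.pyth X]; linarith [hs_nonneg ((1 - P) * X)]

def R (P0 : Matrix n n ℂ) (P : ℕ → Matrix n n ℂ) : ℕ → Matrix n n ℂ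
  | 0 => P0
  | k + 1 => (1 - P k) * R P0 P k

lemma R_tele {P0 : Matrix n n ℂ} {P : ℕ → Matrix n n ℂ} (h0 : IsProj P0) (h : ∀ k, IsProj (P k))
    (N : ℕ) : ∑ i ∈ Finset.range N, (P i * R P0 P i)ᴴ * (P i * R P0 P i)
      = P0 - (R P0 P N)ᴴ * R P0 P N := by
  induction N with
  | zero => simp [R, h0.herm, h0.idem]
  | succ N ih =>
    rw [Finset.sum_range_succ, ih, R, (h N).one_sub.conj_mul, (h N).conj_mul]
    simp only [Matrix.mul_sub, Matrix.sub_mul, Matrix.mul_one]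
    abel

lemma R_union {P0 : Matrix n n ℂ} {P : ℕ → Matrix n n ℂ} (h : ∀ k, IsProj (P k))
    (A : Matrix n k ℂ) (N : ℕ) :
    hs (P0 * A - R P0 P N * A) ≤ ∑ i ∈ Finset.range N, hs (P i * (P0 * A)) := by
  induction N with
  | zero => simp [R, hs]
  | succ N ih =>
    rw [Finset.sum_range_succ, R, (h N).pyth]
    have e1 : P N * (P0 * A - (1 - P N) * R P0 P N * A) = P N * (P0 * A) := by
      rw [Matrix.mul_sub, ← Matrix.mul_assoc (P N) (_ * _), ← Matrix.mul_assoc (P N) (1 - _),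
        Matrix.mul_sub (P N) 1, (h N).idem]
      simp
    have e2 : (1 - P N) * (P0 * A - (1 - P N) * R P0 P N * A) =
        (1 - P N) * (P0 * A - R P0 P N * A) := by
      rw [Matrix.mul_sub, Matrix.mul_sub, Matrix.mul_assoc _ _ A, ← Matrix.mul_assoc (1 - P N) (1 - _),
         (h N).one_sub.idem]
    rw [e1, e2]
    linarith [(h N).one_sub.le (P0 * A - R P0 P N * A)]

lemma one_shot {N : ℕ} {P0 : Matrix n n ℂ} {P : Fin N → Matrix n n ℂ} (h0 : IsProj P0)
    (h : ∀ k, IsProj (P k)) (A : Fin N → Matrix n n ℂ) (hA : ∀ i, hs (A i) = 1)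
    {η : ℝ} (hη : 0 < η) :
    ∃ D : Fin N → Matrix n n ℂ, (∀ i, (D i).PosSemidef) ∧ (1 - ∑ i, D i).PosSemidef ∧
      ∀ i, 1 - η - (6 * hs ((1 - P0) * A i) + 4 * hs ((1 - P i) * A i)
        + 2 * ∑ j ∈ Finset.univ.erase i, hs (P j * (P0 * A i))) / η
        ≤ ((A i * (A i)ᴴ * D i).trace).re := by
  set P' : ℕ → Matrix n n ℂ := fun k => if hk : k < N then P ⟨k, hk⟩ else 0 with hP'
  have hp : ∀ k, IsProj (P' k) := by
    intro k
    by_cases hk : k < N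
    · simp only [hP', hk, dif_pos]; exact h _
    · simp only [hP', hk, dif_neg, not_false_eq_true]; exact ⟨by simp, by simp⟩
  have hPi : ∀ i : Fin N, P' i = P i := by intro i; simp [hP']
  refine ⟨fun i => (P' i * R P0 P' i)ᴴ * (P' i * R P0 P' i), ?_, ?_, ?_⟩
  · intro i; exact posSemidef_conjTranspose_mul_self _
  · rw [Fin.sum_univ_eq_sum_range (fun i => (P' i * R P0 P' i)ᴴ * (P' i * R P0 P' i)), R_tele h0 hp]
    have : (1 : Matrix n n ℂ) - (P0 - (R P0 P' N)ᴴ * R P0 P' N)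
        = (1 - P0)ᴴ * (1 - P0) + (R P0 P' N)ᴴ * R P0 P' N := by
      rw [h0.one_sub.herm, h0.one_sub.idem]; abel
    rw [this]
    exact (posSemidef_conjTranspose_mul_self _).add (posSemidef_conjTranspose_mul_self _)
  · intro i
    set F := P' i * R P0 P' i * A i with hF
    have e : ((A i * (A i)ᴴ * ((P' i * R P0 P' i)ᴴ * (P' i * R P0 P' i))).trace).re = hs F := by
      rw [hs, hF, conjTranspose_mul (P' i * R P0 P' i)]
      congr 1
      rw [Matrix.mul_assoc (A i), trace_mul_comm]
      simp only [Matrix.mul_assoc]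
    rw [e]
    refine le_trans ?_ (hs_sub_ge (A i) F hη)
    rw [hA]
    have z1 : hs (A i - F) ≤ 2 * hs ((1 - P0) * A i) + 2 * hs (P0 * A i - F) := by
      refine le_trans (le_of_eq ?_) (hs_add_le _ _)
      congr 1
      simp [Matrix.sub_mul]
    have z2 : hs (P0 * A i - F) ≤ hs ((1 - P i) * (P0 * A i)) + hs (P0 * A i - R P0 P' i * A i) := by
      rw [(h i).pyth]
      have e1 : (1 - P i) * (P0 * A i - F) = (1 - P i) * (P0 * A i) := by
        rw [Matrix.mul_sub, hF, hPi, ← Matrix.mul_assoc (1 - P i) (_ * _), ← Matrix.mul_assoc (1 - P i) (P i),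
          Matrix.sub_mul 1 (P i) (P i), (h i).idem]
        simp
      have e2 : P i * (P0 * A i - F) = P i * (P0 * A i - R P0 P' i * A i) := by
        rw [Matrix.mul_sub, Matrix.mul_sub, hF, hPi, Matrix.mul_assoc (P i) _ (A i),
          ← Matrix.mul_assoc (P i) (P i), (h i).idem]
      rw [e1, e2]
      linarith [(h i).le (P0 * A i - R P0 P' i * A i)]
    have z3 : hs ((1 - P i) * (P0 * A i)) ≤ 2 * hs ((1 - P i) * A i) + 2 * hs ((1 - P0) * A i) := by
      have e1 : (1 - P i) * (P0 * A i) = (1 - P i) * A i + -((1 - P i) * ((1 - P0) * A i)) := by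
        rw [← sub_eq_add_neg, ← Matrix.mul_sub]
        simp [Matrix.sub_mul]
      rw [e1]
      have := hs_add_le ((1 - P i) * A i) (-((1 - P i) * ((1 - P0) * A i)))
      rw [hs_neg] at this
      linarith [(h i).one_sub.le ((1 - P0) * A i)]
    have z4 : ∑ k ∈ Finset.range i, hs (P' k * (P0 * A i)) ≤
        ∑ j ∈ Finset.univ.erase i, hs (P j * (P0 * A i)) := by
      have : ∑ k ∈ Finset.range i, hs (P' k * (P0 * A i)) =
          ∑ j ∈ Finset.univ.filter (fun j : Fin N => j < i), hs (P j * (P0 * A i)) := by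
        symm
        refine Finset.sum_bij (fun j _ => (j : ℕ)) ?_ ?_ ?_ ?_
        · intro j hj; simpa using hj
        · intro a _ b _ hab; exact Fin.ext hab
        · intro b hb
          have hb' := Finset.mem_range.1 hb
          exact ⟨⟨b, hb'.trans i.2⟩, Finset.mem_filter.2 ⟨Finset.mem_univ _, hb'⟩, rfl⟩
        · intro j _; rw [hPi]
      rw [this]
      refine Finset.sum_le_sum_of_subset_of_nonneg ?_ fun _ _ _ => hs_nonneg _
      intro j hj
      simp only [Finset.mem_filter, Finset.mem_univ, true_and] at hj
      simp [hj.ne]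
    have z5 := R_union (P0 := P0) hp (A i) i
    have : hs (A i - F) ≤ 6 * hs ((1 - P0) * A i) + 4 * hs ((1 - P i) * A i)
        + 2 * ∑ j ∈ Finset.univ.erase i, hs (P j * (P0 * A i)) := by linarith
    have := div_le_div_of_nonneg_right this hη.le
    linarith
end
end HSW
namespace HSW

/-- product expectation -/
lemma prod_exp {ι Ω : Type*} [Fintype ι] [DecidableEq ι] [Fintype Ω] {K : Type*} [CommSemiring K]
    (g : ι → Ω → K) : ∑ U : ι → Ω, ∏ k, g k (U k) = ∏ k, ∑ u, g k u := by
  rw [Finset.prod_univ_sum]; simp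

section
variable {ι Ω : Type*} [Fintype ι] [DecidableEq ι] [Fintype Ω] [DecidableEq Ω]
  (Q : Ω → ℝ) (hQ : ∑ u, Q u = 1)
include hQ

lemma exp_one (i : ι) (g : Ω → ℝ) :
    ∑ U : ι → Ω, (∏ k, Q (U k)) * g (U i) = ∑ u, Q u * g u := by
  have h1 : ∀ U : ι → Ω, (∏ k, Q (U k)) * g (U i) = ∏ k, (Q (U k) * if k = i then g (U k) else 1) := by
    intro U; rw [Finset.prod_mul_distrib]; simp
  simp only [h1]
  rw [prod_exp (fun k u => Q u * if k = i then g u else 1), Finset.prod_eq_single i]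
  · simp
  · intro b _ hb; simp [hb, hQ]
  · simp

lemma exp_two {i j : ι} (hij : i ≠ j) (g : Ω → Ω → ℝ) :
    ∑ U : ι → Ω, (∏ k, Q (U k)) * g (U i) (U j) = ∑ u, ∑ v, Q u * Q v * g u v := by
  have h1 : ∀ U : ι → Ω, (∏ k, Q (U k)) * g (U i) (U j) = ∑ u, ∑ v, g u v *
      ∏ k, (Q (U k) * ((if k = i then (if U k = u then 1 else 0) else 1) *
        (if k = j then (if U k = v then 1 else 0) else 1))) := by
    intro U
    simp only [Finset.prod_mul_distrib, Finset.prod_ite_eq', Finset.mem_univ, if_true]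
    rw [Finset.sum_eq_single (U i), Finset.sum_eq_single (U j)]
    · simp [mul_comm]
    · intro b _ hb; simp [hb.symm]
    · simp
    · intro b _ hb; simp [hb.symm]
    · simp
  simp only [h1]
  rw [Finset.sum_comm]
  refine Finset.sum_congr rfl fun u _ => ?_
  rw [Finset.sum_comm]
  refine Finset.sum_congr rfl fun v _ => ?_
  rw [← Finset.mul_sum, prod_exp (fun k w => Q w * ((if k = i then (if w = u then 1 else 0) else 1) *
        (if k = j then (if w = v then 1 else 0) else 1))), mul_comm]
  congr 1
  rw [Finset.prod_eq_mul i j hij]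
  · simp [hij, hij.symm]
  · intro c _ hc; simp [hc.1, hc.2, hQ]
  · simp
  · simp

/-- random code expectation -/
lemma exp_code {N : ℕ} (hN : 1 ≤ N) (a b : Ω → ℝ) (c : Ω → Ω → ℝ) (κ τ : ℝ)
    (ha : ∑ u, Q u * a u ≤ κ) (hb : ∑ u, Q u * b u ≤ κ)
    (hc : ∑ u, ∑ v, Q u * Q v * c u v ≤ τ) (hτ : 0 ≤ τ) :
    ∑ U : Fin N → Ω, (∏ k, Q (U k)) * ((N : ℝ)⁻¹ * ∑ i, (6 * a (U i) + 4 * b (U i) +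
      2 * ∑ j ∈ Finset.univ.erase i, c (U j) (U i))) ≤ 10 * κ + 2 * N * τ := by
  have hN' : (0 : ℝ) < N := by exact_mod_cast hN
  have key : ∑ U : Fin N → Ω, (∏ k, Q (U k)) * ((N : ℝ)⁻¹ * ∑ i, (6 * a (U i) + 4 * b (U i) +
      2 * ∑ j ∈ Finset.univ.erase i, c (U j) (U i))) = (N : ℝ)⁻¹ * ∑ i : Fin N,
        (6 * ∑ u, Q u * a u + 4 * ∑ u, Q u * b u + 2 * ∑ j ∈ Finset.univ.erase i,
          ∑ u, ∑ v, Q u * Q v * c u v) := by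
    have : ∀ U : Fin N → Ω, (∏ k, Q (U k)) * ((N : ℝ)⁻¹ * ∑ i, (6 * a (U i) + 4 * b (U i) +
      2 * ∑ j ∈ Finset.univ.erase i, c (U j) (U i))) = (N : ℝ)⁻¹ * ∑ i,
        (6 * ((∏ k, Q (U k)) * a (U i)) + 4 * ((∏ k, Q (U k)) * b (U i)) +
          2 * ∑ j ∈ Finset.univ.erase i, (∏ k, Q (U k)) * c (U j) (U i)) := by
      intro U
      rw [mul_left_comm, Finset.mul_sum]
      congr 1
      refine Finset.sum_congr rfl fun i _ => ?_
      rw [← Finset.mul_sum]; ring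
    simp only [this]
    rw [← Finset.mul_sum, Finset.sum_comm]
    congr 1
    refine Finset.sum_congr rfl fun i _ => ?_
    rw [Finset.sum_add_distrib, Finset.sum_add_distrib, ← Finset.mul_sum, ← Finset.mul_sum,
      ← Finset.mul_sum, exp_one Q hQ, exp_one Q hQ, Finset.sum_comm]
    congr 2
    refine Finset.sum_congr rfl fun j hj => ?_
    exact exp_two Q hQ (Finset.ne_of_mem_erase hj) c
  rw [key]
  have : ∀ i : Fin N, (6 * ∑ u, Q u * a u + 4 * ∑ u, Q u * b u + 2 * ∑ j ∈ Finset.univ.erase i,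
          ∑ u, ∑ v, Q u * Q v * c u v) ≤ 10 * κ + 2 * N * τ := by
    intro i
    have h2 : ∑ j ∈ Finset.univ.erase i, ∑ u, ∑ v, Q u * Q v * c u v ≤ N * τ := by
      refine (Finset.sum_le_sum fun _ _ => hc).trans ?_
      refine (Finset.sum_le_sum_of_subset_of_nonneg (Finset.subset_univ _) fun _ _ _ => hτ).trans ?_
      simp
    linarith
  have := Finset.sum_le_sum fun i (_ : i ∈ Finset.univ) => this i
  rw [Finset.sum_const, Finset.card_univ, Fintype.card_fin, nsmul_eq_mul] at this
  calc _ ≤ (N : ℝ)⁻¹ * (N * (10 * κ + 2 * N * τ)) := by gcongr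
    _ = _ := by field_simp

lemma second_moment (g : Ω → ℝ) (hg : ∑ u, Q u * g u = 0) :
    ∑ U : ι → Ω, (∏ k, Q (U k)) * (∑ t, g (U t)) ^ 2 = Fintype.card ι * ∑ u, Q u * g u ^ 2 := by
  have : ∀ U : ι → Ω, (∏ k, Q (U k)) * (∑ t, g (U t)) ^ 2 =
      ∑ s, ∑ t, (∏ k, Q (U k)) * (g (U s) * g (U t)) := by
    intro U
    rw [sq, Finset.sum_mul_sum, Finset.mul_sum]
    simp only [Finset.mul_sum]
  simp only [this]
  rw [Finset.sum_comm]
  have h : ∀ s : ι, ∑ U : ι → Ω, ∑ t, (∏ k, Q (U k)) * (g (U s) * g (U t)) = ∑ u, Q u * g u ^ 2 := by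
    intro s
    rw [Finset.sum_comm, Finset.sum_eq_single s]
    · rw [exp_one Q hQ s (fun u => g u * g u)]; simp [sq]
    · intro t _ hts
      rw [exp_two Q hQ hts.symm (fun u v => g u * g v)]
      have : ∀ u v, Q u * Q v * (g u * g v) = (Q u * g u) * (Q v * g v) := by intros; ring
      simp only [this, ← Finset.mul_sum, hg]; simp
    · simp
  simp only [h]; simp

end

lemma cheb {Ω : Type*} [Fintype Ω] [DecidableEq Ω]
    (Q : Ω → ℝ) (hQ0 : ∀ u, 0 ≤ Q u) (hQ : ∑ u, Q u = 1) (f : Ω → ℝ) {δ κ : ℝ} (hδ : 0 < δ)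
    (hκ : 0 < κ) : ∃ n₀ : ℕ, ∀ n, n₀ ≤ n → ∀ S : Finset (Fin n → Ω),
      (∀ x ∈ S, (∏ t, Q (x t)) ≠ 0 → n * δ ≤ |∑ t, f (x t) - n * ∑ u, Q u * f u|) →
      ∑ x ∈ S, ∏ t, Q (x t) ≤ κ := by
  set μ := ∑ u, Q u * f u with hμ
  set V := ∑ u, Q u * (f u - μ) ^ 2 with hV
  have hV0 : 0 ≤ V := Finset.sum_nonneg fun u _ => mul_nonneg (hQ0 u) (sq_nonneg _)
  obtain ⟨n₀, hn₀⟩ := exists_nat_gt (V / (κ * δ ^ 2))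
  refine ⟨n₀ + 1, fun n hn S hS => ?_⟩
  have hn' : (n₀ : ℝ) + 1 ≤ n := by exact_mod_cast hn
  have hnpos : (0 : ℝ) < n := by linarith [(Nat.cast_nonneg n₀ : (0:ℝ) ≤ n₀)]
  have hg : ∑ u, Q u * (f u - μ) = 0 := by
    simp [mul_sub, Finset.sum_sub_distrib, ← Finset.sum_mul, hQ, hμ]
  have h2 := second_moment (ι := Fin n) Q hQ (fun u => f u - μ) hg
  rw [← hV, Fintype.card_fin] at h2
  have hP : ∀ x : Fin n → Ω, 0 ≤ ∏ t, Q (x t) := fun x => Finset.prod_nonneg fun t _ => hQ0 _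
  have h3 : (n * δ) ^ 2 * ∑ x ∈ S, ∏ t, Q (x t) ≤ n * V := by
    rw [← h2, Finset.mul_sum]
    refine le_trans (Finset.sum_le_sum (g := fun x => (∏ t, Q (x t)) * (∑ t, (f (x t) - μ)) ^ 2) ?_)
      (Finset.sum_le_sum_of_subset_of_nonneg (Finset.subset_univ _) fun x _ _ =>
        mul_nonneg (hP x) (sq_nonneg _))
    intro x hx
    by_cases h0 : ∏ t, Q (x t) = 0
    · simp [h0]
    · have := hS x hx h0
      rw [mul_comm]
      refine mul_le_mul_of_nonneg_left ?_ (hP x)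
      rw [← sq_abs (∑ t, (f (x t) - μ))]
      have e : ∑ t, (f (x t) - μ) = ∑ t, f (x t) - n * μ := by simp [Finset.sum_sub_distrib]
      rw [e]; gcongr
  have h4 : V < n * (κ * δ ^ 2) := by
    rw [div_lt_iff₀ (by positivity)] at hn₀
    have : (n₀ : ℝ) * (κ * δ ^ 2) ≤ n * (κ * δ ^ 2) := by gcongr; linarith
    linarith
  have h5 : (n * δ) ^ 2 * ∑ x ∈ S, ∏ t, Q (x t) ≤ (n * δ) ^ 2 * κ := by
    nlinarith
  exact le_of_mul_le_mul_left h5 (by positivity)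

/-- Markov -/
lemma markov {Ω : Type*} [Fintype Ω] (Q : Ω → ℝ) (hQ0 : ∀ u, 0 ≤ Q u) (hQ : ∑ u, Q u = 1)
    (B : Ω → ℝ) (hB : ∀ u, 0 ≤ B u) {ε : ℝ} (hε : 0 < ε) (hE : ∑ u, Q u * B u ≤ ε * ε)
    (S : Finset Ω) (hS : ∀ u, B u ≤ ε → u ∈ S) : 1 - ε ≤ ∑ u ∈ S, Q u := by
  classical
  have h1 : ∑ u ∈ S, Q u + ∑ u ∈ Sᶜ, Q u = 1 := by rw [Finset.sum_add_sum_compl, hQ]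
  have h2 : ε * ∑ u ∈ Sᶜ, Q u ≤ ε * ε := by
    refine le_trans ?_ hE
    rw [Finset.mul_sum]
    refine le_trans (Finset.sum_le_sum (g := fun u => Q u * B u) ?_)
      (Finset.sum_le_sum_of_subset_of_nonneg (Finset.subset_univ _) fun x _ _ =>
        mul_nonneg (hQ0 x) (hB x))
    intro u hu
    have : ε < B u := by
      by_contra h
      exact (Finset.mem_compl.1 hu) (hS u (not_lt.1 h))
    rw [mul_comm]
    exact mul_le_mul_of_nonneg_left this.le (hQ0 u)
  have := le_of_mul_le_mul_left h2 hε
  linarith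
end HSW
namespace HSW
open Matrix

section
variable {n : Type*} [Fintype n] [DecidableEq n]

structure Dg (V : Matrix n n ℂ) (l : n → ℝ) (W : Matrix n n ℂ) : Prop where
  u1 : V * Vᴴ = 1
  u2 : Vᴴ * V = 1
  eq : W = V * diagonal (fun i => (l i : ℂ)) * Vᴴ
  nn : ∀ i, 0 ≤ l i
  sum : ∑ i, l i = 1

lemma exists_dg {W : Matrix n n ℂ} (h : IsDensityMatrix W) :
    ∃ V l, Dg V l W ∧ vnEntropy W = - ∑ i, l i * Real.logb 2 (l i) := by
  have hH := h.1.isHermitian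
  refine ⟨hH.eigenvectorUnitary, hH.eigenvalues, ⟨?_, ?_, ?_, h.1.eigenvalues_nonneg, ?_⟩, ?_⟩
  · exact (mem_unitaryGroup_iff).1 hH.eigenvectorUnitary.2
  · exact (mem_unitaryGroup_iff').1 hH.eigenvectorUnitary.2
  · conv_lhs => rw [hH.spectral_theorem]
    rw [Unitary.conjStarAlgAut_apply]; rfl
  · have := hH.trace_eq_sum_eigenvalues
    rw [h.2] at this
    have := congrArg Complex.re this
    simpa using this.symm
  · simp [vnEntropy, hH]

noncomputable def root (V : Matrix n n ℂ) (l : n → ℝ) : Matrix n n ℂ :=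
  V * diagonal (fun i => ((√(l i) : ℝ) : ℂ))

noncomputable def pj (V : Matrix n n ℂ) (T : Finset n) : Matrix n n ℂ :=
  V * diagonal (fun i => if i ∈ T then (1 : ℂ) else 0) * Vᴴ

variable {V W : Matrix n n ℂ} {l : n → ℝ}

lemma Dg.root_sq (h : Dg V l W) : root V l * (root V l)ᴴ = W := by
  rw [h.eq, root, conjTranspose_mul, diagonal_conjTranspose, Matrix.mul_assoc, Matrix.mul_assoc,
    ← Matrix.mul_assoc (diagonal _) (diagonal _), diagonal_mul_diagonal]
  congr 4
  funext i
  simp only [Pi.star_apply, RCLike.star_def, Complex.conj_ofReal]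
  rw [← Complex.ofReal_mul, Real.mul_self_sqrt (h.nn i)]

lemma pj_proj (h2 : Vᴴ * V = 1) (T : Finset n) : IsProj (pj V T) := by
  constructor
  · rw [pj, conjTranspose_mul, conjTranspose_mul, conjTranspose_conjTranspose,
      diagonal_conjTranspose, Matrix.mul_assoc]
    congr 3
    funext i
    by_cases hi : i ∈ T <;> simp [hi]
  · have : pj V T * pj V T = V * diagonal (fun i => if i ∈ T then (1 : ℂ) else 0) * (Vᴴ * V)
        * diagonal (fun i => if i ∈ T then (1 : ℂ) else 0) * Vᴴ := by
      simp only [pj, Matrix.mul_assoc]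
    rw [this, h2, Matrix.mul_one, Matrix.mul_assoc V, diagonal_mul_diagonal, pj]
    congr 3
    funext i
    by_cases hi : i ∈ T <;> simp [hi]

lemma one_sub_pj (h1 : V * Vᴴ = 1) (T : Finset n) : 1 - pj V T = pj V Tᶜ := by
  rw [sub_eq_iff_eq_add, pj, pj, ← Matrix.add_mul, ← Matrix.mul_add, diagonal_add]
  have : (fun i => (if i ∈ Tᶜ then (1 : ℂ) else 0) + (if i ∈ T then 1 else 0)) = fun _ => 1 := by
    funext i; by_cases hi : i ∈ T <;> simp [hi]
  rw [this, diagonal_one, Matrix.mul_one, h1]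

lemma pj_root (h2 : Vᴴ * V = 1) (T : Finset n) :
    pj V T * root V l = V * diagonal (fun i => if i ∈ T then ((√(l i) : ℝ) : ℂ) else 0) := by
  have : pj V T * root V l = V * (diagonal (fun i => if i ∈ T then (1 : ℂ) else 0) * (Vᴴ * V)
        * diagonal (fun i => ((√(l i) : ℝ) : ℂ))) := by
      simp only [pj, root, Matrix.mul_assoc]
  rw [this, h2, Matrix.mul_one, diagonal_mul_diagonal]
  congr 2
  funext i
  by_cases hi : i ∈ T <;> simp [hi]

lemma hs_unitary_left (h2 : Vᴴ * V = 1) (X : Matrix n n ℂ) : hs (V * X) = hs X := by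
  rw [hs, hs, conjTranspose_mul, Matrix.mul_assoc, ← Matrix.mul_assoc _ V, h2, Matrix.one_mul]

lemma hs_unitary_right (h1 : V * Vᴴ = 1) (X : Matrix n n ℂ) : hs (X * V) = hs X := by
  rw [hs, hs, conjTranspose_mul, Matrix.mul_assoc, trace_mul_comm, Matrix.mul_assoc,
    Matrix.mul_assoc, h1, Matrix.mul_one]

lemma hs_mul_diag (X : Matrix n n ℂ) (c : n → ℂ) :
    hs (X * diagonal c) = ∑ j, ‖c j‖ ^ 2 * ∑ i, ‖X i j‖ ^ 2 := by
  rw [hs_eq]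
  refine Finset.sum_congr rfl fun j _ => ?_
  rw [Finset.mul_sum]
  refine Finset.sum_congr rfl fun i _ => ?_
  rw [mul_diagonal, norm_mul]; ring

lemma hs_diag (c : n → ℂ) : hs (diagonal c) = ∑ j, ‖c j‖ ^ 2 := by
  rw [← Matrix.one_mul (diagonal c), hs_mul_diag]
  refine Finset.sum_congr rfl fun j _ => ?_
  rw [Finset.sum_eq_single j]
  · simp
  · intro b _ hb; simp [hb]
  · simp

lemma hs_mul_diag_le (X : Matrix n n ℂ) (c : n → ℂ) {τ : ℝ} (hc : ∀ j, ‖c j‖ ^ 2 ≤ τ) :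
    hs (X * diagonal c) ≤ τ * hs X := by
  rw [hs_mul_diag, hs_eq, Finset.mul_sum]
  gcongr with j _
  exact hc j

lemma Dg.hs_root (h : Dg V l W) : hs (root V l) = 1 := by
  rw [root, hs_unitary_left h.u2, hs_diag, ← h.sum]
  refine Finset.sum_congr rfl fun i _ => ?_
  rw [Complex.norm_real, Real.norm_eq_abs, sq_abs, Real.sq_sqrt (h.nn i)]

lemma Dg.hs_compl (h : Dg V l W) (T : Finset n) :
    hs ((1 - pj V T) * root V l) = ∑ i ∈ Tᶜ, l i := by
  rw [one_sub_pj h.u1, pj_root h.u2, hs_unitary_left h.u2, hs_diag, ← Finset.sum_filter_add_sum_filter_not _ (fun i => i ∈ Tᶜ)]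
  rw [Finset.sum_eq_zero (s := Finset.univ.filter fun i => ¬ i ∈ Tᶜ), add_zero, Finset.filter_univ_mem]
  · refine Finset.sum_congr rfl fun i hi => ?_
    rw [if_pos hi, Complex.norm_real, Real.norm_eq_abs, sq_abs, Real.sq_sqrt (h.nn i)]
  · intro i hi; rw [if_neg (Finset.mem_filter.1 hi).2]; simp

lemma hs_pj (h1 : V * Vᴴ = 1) (h2 : Vᴴ * V = 1) (T : Finset n) : hs (pj V T) = T.card := by
  have h3 : Vᴴ * Vᴴᴴ = 1 := by rw [conjTranspose_conjTranspose, h2]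
  rw [pj, hs_unitary_right h3, hs_unitary_left h2, hs_diag]
  have : ∀ j, ‖(if j ∈ T then (1 : ℂ) else 0)‖ ^ 2 = if j ∈ T then (1 : ℝ) else 0 := by
    intro j; by_cases hj : j ∈ T <;> simp [hj]
  simp [this]

lemma Dg.hs_cross (h : Dg V l W) (T : Finset n) {τ : ℝ} (hτ : 0 ≤ τ) (hT : ∀ i ∈ T, l i ≤ τ)
    {V' : Matrix n n ℂ} (h1 : V' * V'ᴴ = 1) (h2 : V'ᴴ * V' = 1) (T' : Finset n) :
    hs (pj V' T' * (pj V T * root V l)) ≤ τ * T'.card := by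
  rw [pj_root h.u2, ← Matrix.mul_assoc]
  refine (hs_mul_diag_le _ _ (τ := τ) ?_).trans ?_
  · intro j
    by_cases hj : j ∈ T
    · rw [if_pos hj, Complex.norm_real, Real.norm_eq_abs, sq_abs, Real.sq_sqrt (h.nn j)]
      exact hT j hj
    · simp [hj, hτ]
  · rw [hs_unitary_right h.u1, hs_pj h1 h2]

lemma hs_avg {Ω : Type*} [Fintype Ω] (Q : Ω → ℝ) (A : Ω → Matrix n n ℂ) (B X : Matrix n n ℂ)
    (h : ∑ u, (Q u : ℂ) • (A u * (A u)ᴴ) = B * Bᴴ) : ∑ u, Q u * hs (X * A u) = hs (X * B) := by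
  have key : ∀ Y : Matrix n n ℂ, hs (X * Y) = ((X * (Y * Yᴴ) * Xᴴ).trace).re := by
    intro Y
    rw [hs, trace_mul_comm, conjTranspose_mul]
    simp only [Matrix.mul_assoc]
  simp only [key]
  rw [← h, Finset.mul_sum, Finset.sum_mul, trace_sum, Complex.re_sum]
  refine Finset.sum_congr rfl fun u _ => ?_
  rw [Matrix.mul_smul, Matrix.smul_mul, trace_smul, smul_eq_mul, Complex.re_ofReal_mul]

end

section tens
variable {d n : ℕ}

def tens (M : Fin n → Matrix (Fin d) (Fin d) ℂ) : Matrix (Fin n → Fin d) (Fin n → Fin d) ℂ :=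
  Matrix.of fun J K => ∏ t, M t (J t) (K t)

lemma tens_mul (M L : Fin n → Matrix (Fin d) (Fin d) ℂ) :
    tens (fun t => M t * L t) = tens M * tens L := by
  ext J K
  simp only [tens, of_apply, mul_apply, ← Finset.prod_mul_distrib]
  rw [prod_exp (fun t j => M t (J t) j * L t j (K t))]

lemma tens_conj (M : Fin n → Matrix (Fin d) (Fin d) ℂ) :
    tens (fun t => (M t)ᴴ) = (tens M)ᴴ := by
  ext J K
  simp [tens, of_apply, conjTranspose_apply]

lemma tens_diag (c : Fin n → Fin d → ℂ) :
    tens (fun t => diagonal (c t)) = diagonal (fun J => ∏ t, c t (J t)) := by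
  ext J K
  simp only [tens, of_apply, diagonal_apply]
  by_cases h : J = K
  · subst h; simp
  · rw [if_neg h]
    obtain ⟨t, ht⟩ := Function.ne_iff.1 h
    exact Finset.prod_eq_zero (Finset.mem_univ t) (by simp [ht])

lemma tens_one : tens (fun _ : Fin n => (1 : Matrix (Fin d) (Fin d) ℂ)) = 1 := by
  have := tens_diag (fun (_ : Fin n) (_ : Fin d) => (1 : ℂ))
  simpa using this

lemma tens_dg {V W : Fin n → Matrix (Fin d) (Fin d) ℂ} {l : Fin n → Fin d → ℝ}
    (h : ∀ t, Dg (V t) (l t) (W t)) : Dg (tens V) (fun J => ∏ t, l t (J t)) (tens W) where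
  u1 := by rw [← tens_conj, ← tens_mul]; simp only [(h _).u1, tens_one]
  u2 := by rw [← tens_conj, ← tens_mul]; simp only [(h _).u2, tens_one]
  eq := by
    have : W = fun t => V t * diagonal (fun i => (l t i : ℂ)) * (V t)ᴴ := funext fun t => (h t).eq
    rw [this, tens_mul, tens_mul, tens_conj, tens_diag]
    simp only [Complex.ofReal_prod]
  nn J := Finset.prod_nonneg fun t _ => (h t).nn _
  sum := by rw [prod_exp l]; simp only [(h _).sum]; simp

lemma tens_avg {m : ℕ} (q : Fin m → ℝ) (W : Fin m → Matrix (Fin d) (Fin d) ℂ) :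
    ∑ u : Fin n → Fin m, ((∏ t, q (u t) : ℝ) : ℂ) • tens (fun t => W (u t)) =
      tens (fun _ => ∑ j, (q j : ℂ) • W j) := by
  ext J K
  simp only [Matrix.sum_apply, Matrix.smul_apply, tens, of_apply, smul_eq_mul, Complex.ofReal_prod,
    ← Finset.prod_mul_distrib]
  rw [prod_exp (fun t j => (q j : ℂ) * W j (J t) (K t))]
end tens

lemma card_le {n : Type*} [Fintype n] {l : n → ℝ} (h0 : ∀ i, 0 ≤ l i) (hs : ∑ i, l i = 1)
    {θ : ℝ} (hθ : 0 < θ) (T : Finset n) (hT : ∀ i ∈ T, θ ≤ l i) : (T.card : ℝ) ≤ θ⁻¹ := by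
  have h1 : T.card • θ ≤ ∑ i ∈ T, l i := Finset.card_nsmul_le_sum _ _ _ hT
  have h2 : ∑ i ∈ T, l i ≤ 1 := by
    rw [← hs]; exact Finset.sum_le_sum_of_subset_of_nonneg (Finset.subset_univ _) fun i _ _ => h0 i
  rw [nsmul_eq_mul] at h1
  rw [← one_div, le_div_iff₀ hθ]; linarith

end HSW
namespace HSW
open Matrix

lemma typ_rho {d : ℕ} (l : Fin d → ℝ) (h0 : ∀ i, 0 ≤ l i) (h1 : ∑ i, l i = 1) (S : ℝ)
    (hS : S = - ∑ i, l i * Real.logb 2 (l i)) {δ κ : ℝ} (hδ : 0 < δ) (hκ : 0 < κ) :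
    ∃ n₀ : ℕ, ∀ n : ℕ, n₀ ≤ n → ∀ T : Finset (Fin n → Fin d),
      (∀ J, ∏ t, l (J t) ≤ (2 : ℝ) ^ (-(n * (S - δ)) : ℝ) → J ∈ T) →
      ∑ J ∈ Tᶜ, ∏ t, l (J t) ≤ κ := by
  obtain ⟨n₀, hn₀⟩ := cheb l h0 h1 (fun i => - Real.logb 2 (l i)) hδ hκ
  refine ⟨n₀, fun n hn T hT => hn₀ n hn _ fun J hJ hne => ?_⟩
  have hgt : (2 : ℝ) ^ (-(n * (S - δ)) : ℝ) < ∏ t, l (J t) := by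
    by_contra h
    exact Finset.mem_compl.1 hJ (hT J (not_lt.1 h))
  have hl : ∀ t, l (J t) ≠ 0 := fun t => (Finset.prod_ne_zero_iff.1 hne) t (Finset.mem_univ t)
  have := Real.logb_lt_logb (b := 2) (by norm_num) (by positivity) hgt
  rw [Real.logb_rpow (by norm_num) (by norm_num), Real.logb_prod _ _ (fun t _ => hl t)] at this
  have hμ : ∑ u, l u * - Real.logb 2 (l u) = S := by rw [hS]; simp
  rw [hμ, abs_sub_comm]
  refine le_trans ?_ (le_abs_self _)
  rw [Finset.sum_neg_distrib]
  linarith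

lemma typ_cond {m d : ℕ} (q : Fin m → ℝ) (hq : ∀ j, 0 ≤ q j) (hqs : ∑ j, q j = 1)
    (l : Fin m → Fin d → ℝ) (h0 : ∀ j i, 0 ≤ l j i) (h1 : ∀ j, ∑ i, l j i = 1) (H : ℝ)
    (hH : H = ∑ j, q j * - ∑ i, l j i * Real.logb 2 (l j i)) {δ κ : ℝ} (hδ : 0 < δ) (hκ : 0 < κ) :
    ∃ n₀ : ℕ, ∀ n : ℕ, n₀ ≤ n → ∀ T : (Fin n → Fin m) → Finset (Fin n → Fin d),
      (∀ u J, (2 : ℝ) ^ (-(n * (H + δ)) : ℝ) ≤ ∏ t, l (u t) (J t) → J ∈ T u) →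
      ∑ u : Fin n → Fin m, (∏ t, q (u t)) * ∑ J ∈ (T u)ᶜ, ∏ t, l (u t) (J t) ≤ κ := by
  have hp1 : ∑ x : Fin m × Fin d, q x.1 * l x.1 x.2 = 1 := by
    rw [Fintype.sum_prod_type]
    simp only [← Finset.mul_sum, h1, mul_one, hqs]
  obtain ⟨n₀, hn₀⟩ := cheb (fun x : Fin m × Fin d => q x.1 * l x.1 x.2)
    (fun x => mul_nonneg (hq _) (h0 _ _)) hp1 (fun x => - Real.logb 2 (l x.1 x.2)) hδ hκ
  refine ⟨n₀, fun n hn T hT => ?_⟩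
  have hμ : ∑ u : Fin m × Fin d, q u.1 * l u.1 u.2 * - Real.logb 2 (l u.1 u.2) = H := by
    rw [hH, Fintype.sum_prod_type]
    refine Finset.sum_congr rfl fun j _ => ?_
    simp [Finset.mul_sum, mul_assoc]
  rw [hμ] at hn₀
  have e : ∑ u : Fin n → Fin m, (∏ t, q (u t)) * ∑ J ∈ (T u)ᶜ, ∏ t, l (u t) (J t) =
      ∑ x ∈ Finset.univ.filter (fun x : Fin n → Fin m × Fin d =>
        (fun t => (x t).2) ∈ (T fun t => (x t).1)ᶜ), ∏ t, (q (x t).1 * l (x t).1 (x t).2) := by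
    rw [Finset.sum_filter]
    rw [← (Equiv.arrowProdEquivProdArrow (Fin n) (fun _ => Fin m) (fun _ => Fin d)).symm.sum_comp,
      Fintype.sum_prod_type]
    refine Finset.sum_congr rfl fun u _ => ?_
    rw [Finset.mul_sum, ← Finset.sum_filter]
    refine Finset.sum_congr ?_ fun J _ => ?_
    · ext J; simp [Equiv.arrowProdEquivProdArrow]
    · rw [← Finset.prod_mul_distrib]; rfl
  rw [e]
  refine hn₀ n hn _ fun x hx hne => ?_
  have hx' := (Finset.mem_filter.1 hx).2
  have hlt : ∏ t, l (x t).1 (x t).2 < (2 : ℝ) ^ (-(n * (H + δ)) : ℝ) := by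
    by_contra h
    exact Finset.mem_compl.1 hx' (hT (fun t => (x t).1) (fun t => (x t).2) (not_lt.1 h))
  have hl : ∀ t, l (x t).1 (x t).2 ≠ 0 := fun t =>
    right_ne_zero_of_mul ((Finset.prod_ne_zero_iff.1 hne) t (Finset.mem_univ t))
  have hpos : 0 < ∏ t, l (x t).1 (x t).2 :=
    Finset.prod_pos fun t _ => lt_of_le_of_ne (h0 _ _) (hl t).symm
  have := Real.logb_lt_logb (b := 2) (by norm_num) hpos hlt
  rw [Real.logb_rpow (by norm_num) (by norm_num), Real.logb_prod _ _ (fun t _ => hl t)] at this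
  refine le_trans ?_ (le_abs_self _)
  rw [Finset.sum_neg_distrib]
  linarith

set_option maxHeartbeats 2000000 in
lemma main_aux {m d : ℕ}
    (W : Fin m → Matrix (Fin d) (Fin d) ℂ) (hW : ∀ j, IsDensityMatrix (W j))
    (q : Fin m → ℝ) (hq : ∀ j, 0 < q j) (hqs : ∑ j, q j = 1)
    (χ : ℝ)
    (hχ : χ = vnEntropy (∑ j, (q j : ℂ) • W j) - ∑ j, q j * vnEntropy (W j))
    (ε δ : ℝ) (hε0 : 0 < ε) (hδ0 : 0 < δ) :
    ∃ n₀ : ℕ, ∀ n, n₀ ≤ n → ∀ N : ℕ, 1 ≤ N → Real.logb 2 N ≤ n * (χ - δ) →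
      ∀ G : Finset (Fin N → Fin n → Fin m), (∀ U : Fin N → Fin n → Fin m,
            (∃ D : Fin N → Matrix (Fin n → Fin d) (Fin n → Fin d) ℂ,
              (∀ i, (D i).PosSemidef) ∧ (1 - ∑ i, D i).PosSemidef ∧
              1 - ε ≤ (N : ℝ)⁻¹ * ∑ i, ((tensorWord W (U i) * D i).trace).re) → U ∈ G) →
      1 - ε ≤ ∑ U ∈ G, ∏ i, ∏ t, q (U i t) := by
  set ρ := ∑ j, (q j : ℂ) • W j with hρ
  have hρd : IsDensityMatrix ρ := by
    constructor
    · refine Matrix.posSemidef_sum _ fun j _ => (hW j).1.smul ?_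
      exact_mod_cast (hq j).le
    · rw [hρ, trace_sum]
      simp only [trace_smul, (hW _).2, smul_eq_mul, mul_one]
      exact_mod_cast hqs
  choose V l hV hent using fun j => exists_dg (hW j)
  obtain ⟨V0, l0, hV0, hent0⟩ := exists_dg hρd
  set S := vnEntropy ρ with hS
  set H := ∑ j, q j * vnEntropy (W j) with hH
  have hδ' : 0 < δ / 4 := by linarith
  set η := ε ^ 2 / 2 with hη
  have hη0 : 0 < η := by positivity
  have hκ : 0 < η ^ 2 / 20 := by positivity
  obtain ⟨n1, hn1⟩ := typ_rho l0 hV0.nn hV0.sum S hent0 hδ' hκ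
  obtain ⟨n2, hn2⟩ := typ_cond q (fun j => (hq j).le) hqs l (fun j => (hV j).nn)
    (fun j => (hV j).sum) H (by rw [hH]; simp only [hent]) hδ' hκ
  obtain ⟨n3, hn3⟩ := exists_nat_gt (- Real.logb 2 (η ^ 2 / 4) / (δ / 2))
  refine ⟨max n1 (max n2 n3), fun n hn N hN hlog G hG => ?_⟩
  specialize hn1 n ((le_max_left _ _).trans hn)
  specialize hn2 n ((le_max_left _ _).trans ((le_max_right _ _).trans hn))
  have hn3' : (n3 : ℝ) ≤ n := by
    exact_mod_cast (le_max_right _ _).trans ((le_max_right _ _).trans hn)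
  have hNpos : (0 : ℝ) < N := by exact_mod_cast hN
  set τ := (2 : ℝ) ^ (-(n * (S - δ / 4)) : ℝ) with hτ
  set θ := (2 : ℝ) ^ (-(n * (H + δ / 4)) : ℝ) with hθ
  have hτ0 : 0 < τ := by positivity
  have hθ0 : 0 < θ := by positivity
  have hrate : N * (τ * θ⁻¹) ≤ η ^ 2 / 4 := by
    have hN2 : (N : ℝ) ≤ (2 : ℝ) ^ (n * (χ - δ)) :=
      (Real.logb_le_iff_le_rpow (by norm_num) hNpos).1 hlog
    have e : (2 : ℝ) ^ (n * (χ - δ)) * (τ * θ⁻¹) = (2 : ℝ) ^ (-(n * (δ / 2)) : ℝ) := by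
      rw [hτ, hθ, ← Real.rpow_neg (by norm_num), ← Real.rpow_add (by norm_num),
        ← Real.rpow_add (by norm_num)]
      congr 1; rw [hχ]; ring
    have h4 : (2 : ℝ) ^ (-(n * (δ / 2)) : ℝ) ≤ η ^ 2 / 4 := by
      rw [← Real.le_logb_iff_rpow_le (by norm_num) (by positivity)]
      rw [div_lt_iff₀ (by positivity)] at hn3
      have : (n3 : ℝ) * (δ / 2) ≤ n * (δ / 2) := by gcongr
      linarith
    calc N * (τ * θ⁻¹) ≤ (2 : ℝ) ^ (n * (χ - δ)) * (τ * θ⁻¹) := by gcongr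
      _ ≤ _ := by rw [e]; exact h4
  -- objects
  set Q : (Fin n → Fin m) → ℝ := fun u => ∏ t, q (u t) with hQdef
  have hQ0 : ∀ u, 0 ≤ Q u := fun u => Finset.prod_nonneg fun t _ => (hq _).le
  have hQ1 : ∑ u, Q u = 1 := by
    rw [hQdef, prod_exp (fun (_ : Fin n) j => q j)]; simp [hqs]
  have dg : ∀ u : Fin n → Fin m, Dg (tens fun t => V (u t)) (fun J => ∏ t, l (u t) (J t))
      (tens fun t => W (u t)) := fun u => tens_dg fun t => hV (u t)
  have dg0 : Dg (tens fun _ : Fin n => V0) (fun J => ∏ t, l0 (J t)) (tens fun _ => ρ) :=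
    tens_dg fun _ => hV0
  set A : (Fin n → Fin m) → Matrix (Fin n → Fin d) (Fin n → Fin d) ℂ :=
    fun u => root (tens fun t => V (u t)) (fun J => ∏ t, l (u t) (J t)) with hA
  set B := root (tens fun _ : Fin n => V0) (fun J => ∏ t, l0 (J t)) with hB
  have hAB : ∑ u, (Q u : ℂ) • (A u * (A u)ᴴ) = B * Bᴴ := by
    rw [hB, dg0.root_sq]
    simp only [hA, (dg _).root_sq]
    exact tens_avg q W
  set T0 : Finset (Fin n → Fin d) := Finset.univ.filter fun J => ∏ t, l0 (J t) ≤ τ with hT0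
  set T : (Fin n → Fin m) → Finset (Fin n → Fin d) :=
    fun u => Finset.univ.filter fun J => θ ≤ ∏ t, l (u t) (J t) with hT
  set P0 := pj (tens fun _ : Fin n => V0) T0 with hP0
  set P : (Fin n → Fin m) → Matrix (Fin n → Fin d) (Fin n → Fin d) ℂ :=
    fun u => pj (tens fun t => V (u t)) (T u) with hP
  have ha : ∑ u, Q u * hs ((1 - P0) * A u) ≤ η ^ 2 / 20 := by
    rw [hs_avg Q A B _ hAB, dg0.hs_compl]
    exact hn1 T0 fun J hJ => Finset.mem_filter.2 ⟨Finset.mem_univ _, hJ⟩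
  have hb : ∑ u, Q u * hs ((1 - P u) * A u) ≤ η ^ 2 / 20 := by
    simp only [hP, hA, (dg _).hs_compl]
    exact hn2 T fun u J hJ => Finset.mem_filter.2 ⟨Finset.mem_univ _, hJ⟩
  have hc : ∑ v, ∑ u, Q v * Q u * hs (P v * (P0 * A u)) ≤ τ * θ⁻¹ := by
    have h1 : ∀ v, ∑ u, Q v * Q u * hs (P v * (P0 * A u)) ≤ Q v * (τ * θ⁻¹) := by
      intro v
      simp only [mul_assoc, ← Finset.mul_sum]
      refine mul_le_mul_of_nonneg_left ?_ (hQ0 v)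
      simp only [← Matrix.mul_assoc]
      rw [hs_avg Q A B _ hAB, Matrix.mul_assoc]
      refine (dg0.hs_cross T0 hτ0.le (fun i hi => (Finset.mem_filter.1 hi).2)
        (dg v).u1 (dg v).u2 (T v)).trans ?_
      gcongr
      exact card_le (dg v).nn (dg v).sum hθ0 _ fun i hi => (Finset.mem_filter.1 hi).2
    refine (Finset.sum_le_sum fun v _ => h1 v).trans ?_
    rw [← Finset.sum_mul, hQ1, one_mul]
  have hE := exp_code Q hQ1 hN (fun u => hs ((1 - P0) * A u)) (fun u => hs ((1 - P u) * A u))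
    (fun v u => hs (P v * (P0 * A u))) _ _ ha hb hc (by positivity)
  set Z : (Fin N → Fin n → Fin m) → ℝ := fun U => (N : ℝ)⁻¹ * ∑ i,
    (6 * hs ((1 - P0) * A (U i)) + 4 * hs ((1 - P (U i)) * A (U i)) +
      2 * ∑ j ∈ Finset.univ.erase i, hs (P (U j) * (P0 * A (U i)))) with hZ
  have hE' : ∑ U : Fin N → Fin n → Fin m, (∏ k, Q (U k)) * Z U ≤ η ^ 2 := by
    refine hE.trans ?_
    nlinarith
  have hQQ1 : ∑ U : Fin N → Fin n → Fin m, ∏ k, Q (U k) = 1 := by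
    rw [prod_exp (fun (_ : Fin N) u => Q u)]; simp [hQ1]
  refine markov (fun U : Fin N → Fin n → Fin m => ∏ k, Q (U k))
    (fun U => Finset.prod_nonneg fun k _ => hQ0 _) hQQ1 (fun U => η + Z U / η) ?_ hε0 ?_ G ?_
  · intro U
    have hz : 0 ≤ Z U := by
      refine mul_nonneg (inv_nonneg.2 hNpos.le) (Finset.sum_nonneg fun i _ => ?_)
      exact add_nonneg (add_nonneg (mul_nonneg (by norm_num) (hs_nonneg _))
        (mul_nonneg (by norm_num) (hs_nonneg _)))
        (mul_nonneg (by norm_num) (Finset.sum_nonneg fun j _ => hs_nonneg _))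
    exact add_nonneg hη0.le (div_nonneg hz hη0.le)
  · have : ∑ U : Fin N → Fin n → Fin m, (∏ k, Q (U k)) * (η + Z U / η) =
        η + (∑ U : Fin N → Fin n → Fin m, (∏ k, Q (U k)) * Z U) / η := by
      simp only [mul_add, Finset.sum_add_distrib, ← Finset.sum_mul, hQQ1, one_mul, Finset.sum_div,
        mul_div_assoc]
    rw [this]
    have h5 : (∑ U : Fin N → Fin n → Fin m, (∏ k, Q (U k)) * Z U) / η ≤ η := by
      rw [div_le_iff₀ hη0]; linarith
    have : ε * ε = 2 * η := by rw [hη]; ring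
    linarith
  · intro U hU
    refine hG U ?_
    obtain ⟨D, hD1, hD2, hD3⟩ := one_shot (P0 := P0) (P := fun i => P (U i))
      (pj_proj dg0.u2 _) (fun i => pj_proj (dg (U i)).u2 _) (fun i => A (U i))
      (fun i => (dg (U i)).hs_root) hη0
    refine ⟨D, hD1, hD2, ?_⟩
    have hA2 : ∀ i, A (U i) * (A (U i))ᴴ = tensorWord W (U i) := fun i => (dg (U i)).root_sq
    have h6 := Finset.sum_le_sum fun i (_ : i ∈ Finset.univ) => hD3 i
    simp only [hA2] at h6
    have h7 := mul_le_mul_of_nonneg_left h6 (inv_nonneg.2 hNpos.le)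
    refine le_trans ?_ h7
    rw [Finset.sum_sub_distrib, ← Finset.sum_div, mul_sub, ← mul_div_assoc]
    have h8 : (N : ℝ)⁻¹ * ∑ _i : Fin N, (1 - η) = 1 - η := by
      simp; field_simp
    rw [h8]
    change 1 - ε ≤ 1 - η - Z U / η
    linarith
end HSW

open scoped Classical in
/-- the Holevo–Schumacher–Westmoreland random coding theorem with
i.i.d. codewords: for rates below the Holevo information, a random code admits a
decoding sub-POVM with average success probability at least `1 − ε`, with
probability at least `1 − ε` over the choice of the code. -/
theorem hsw_random_coding {m d : ℕ}
    (W : Fin m → Matrix (Fin d) (Fin d) ℂ) (hW : ∀ j, IsDensityMatrix (W j))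
    (q : Fin m → ℝ) (hq : ∀ j, 0 < q j) (hqs : ∑ j, q j = 1)
    (χ : ℝ)
    (hχ : χ = vnEntropy (∑ j, (q j : ℂ) • W j) - ∑ j, q j * vnEntropy (W j))
    (hχpos : 0 < χ)
    (ε δ : ℝ) (hε0 : 0 < ε) (hε1 : ε < 1) (hδ0 : 0 < δ) (hδ1 : δ < 1) (hδχ : δ < χ) :
    ∃ n₀ : ℕ, ∀ n, n₀ ≤ n → ∀ N : ℕ, 1 ≤ N → Real.logb 2 N ≤ n * (χ - δ) →
      1 - ε ≤
        ∑ U ∈ Finset.univ.filter (fun U : Fin N → Fin n → Fin m =>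
            ∃ D : Fin N → Matrix (Fin n → Fin d) (Fin n → Fin d) ℂ,
              (∀ i, (D i).PosSemidef) ∧ (1 - ∑ i, D i).PosSemidef ∧
              1 - ε ≤ (N : ℝ)⁻¹ * ∑ i, ((tensorWord W (U i) * D i).trace).re),
          ∏ i, ∏ t, q (U i t) := by
  obtain ⟨n₀, h⟩ := HSW.main_aux W hW q hq hqs χ hχ ε δ hε0 hδ0
  refine ⟨n₀, fun n hn N hN hlog => ?_⟩
  exact h n hn N hN hlog _ (fun U hU => Finset.mem_filter.2 ⟨Finset.mem_univ _, hU⟩)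
end
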